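/- If G is a finite simple graph with maximum average degree Mad(G) < 5/2, then the star chromatic number of G satisfies χ_s(G) ≤ 4. -/

import Mathlib

open SimpleGraph

noncomputable def edgeCount {V : Type*} (G : SimpleGraph V) : ℕ := Nat.card G.edgeSet

noncomputable def deg {V : Type*} (G : SimpleGraph V) (v : V) : ℕ := Nat.card (G.neighborSet v)

def TwoIndependent {V : Type*} (G : SimpleGraph V) (S : Set V) : Prop :=
  ∀ u ∈ S, ∀ v ∈ S, u ≠ v → ¬ G.Adj u v ∧ ∀ w, ¬ (G.Adj u w ∧ G.Adj w v)

def IsIFPartition {V : Type*} (G : SimpleGraph V) (A B : Set V) : Prop :=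
  A ∪ B = Set.univ ∧ Disjoint A B ∧ TwoIndependent G A ∧ (G.induce B).IsAcyclic

def IsAssignment {V : Type*} (I F U : Set V) : Prop :=
  I ∪ F ∪ U = Set.univ ∧ Disjoint I F ∧ Disjoint I U ∧ Disjoint F U

noncomputable def rho {V : Type*} (G : SimpleGraph V) (I F U : Set V) (H : G.Subgraph) : ℤ :=
  (H.verts ∩ I).ncard + 4 * (H.verts ∩ F).ncard + 5 * (H.verts ∩ U).ncard
    - 4 * Nat.card H.edgeSet

noncomputable def rhoSet {V : Type*} (G : SimpleGraph V) (I F U : Set V) (S : Set V) : ℤ :=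
  (S ∩ I).ncard + 4 * (S ∩ F).ncard + 5 * (S ∩ U).ncard - 4 * edgeCount (G.induce S)

def IsCounterexample {V : Type*} [Fintype V] (G : SimpleGraph V) (I F U : Set V) : Prop :=
  IsAssignment I F U ∧
  (∀ H : G.Subgraph, H.verts.Nonempty → 0 < rho G I F U H) ∧
  ¬ ∃ A B : Set V, IsIFPartition G A B ∧ I ⊆ A ∧ F ⊆ B

def IsMinCounterexample {V : Type*} [Fintype V] (G : SimpleGraph V) (I F U : Set V) : Prop :=
  IsCounterexample G I F U ∧
  ∀ (n : ℕ) (G' : SimpleGraph (Fin n)) (I' F' U' : Set (Fin n)),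
    IsCounterexample G' I' F' U' →
    Fintype.card V + edgeCount G ≤ n + edgeCount G'

def IsThread {V : Type*} (G : SimpleGraph V) (I F U : Set V) (p : List V) : Prop :=
  p ≠ [] ∧ p.Nodup ∧ p.Chain' G.Adj ∧ (∀ v ∈ p, v ∈ U ∧ deg G v = 2) ∧
  (∀ w, w ∉ p → (∃ a ∈ p, G.Adj a w) → 3 ≤ deg G w ∨ w ∈ I ∪ F)

def BordersThread {V : Type*} (G : SimpleGraph V) (p : List V) (w : V) : Prop :=
  w ∉ p ∧ ∃ a ∈ p, G.Adj a w

def IsStarForest {V : Type*} (H : SimpleGraph V) : Prop :=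
  H.IsAcyclic ∧ ∀ a b c d : V, H.Adj a b → H.Adj b c → H.Adj c d → a = c ∨ b = d

def IsStarColoring {V : Type*} {k : ℕ} (G : SimpleGraph V) (c : V → Fin k) : Prop :=
  (∀ u v, G.Adj u v → c u ≠ c v) ∧
  ∀ i j : Fin k, IsStarForest (G.induce {v | c v = i ∨ c v = j})

def StarColorable {V : Type*} (G : SimpleGraph V) (k : ℕ) : Prop :=
  ∃ c : V → Fin k, IsStarColoring G c

def MadLt {V : Type*} (G : SimpleGraph V) (q : ℚ) : Prop :=
  ∀ H : G.Subgraph, H.verts.Nonempty →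
    (2 * (Nat.card H.edgeSet : ℚ)) / (H.verts.ncard : ℚ) < q

/-!
A star 4-colouring arises from a partition of the vertices into a 2-independent set (no two of its
vertices are adjacent or have a common neighbour) and a forest: give the former one colour, and
colour the rooted forest by height modulo 3.

To find such a partition by induction, prescribe the part of some of the vertices. An independent,
forest or free vertex weighs 1, 4 or 5, and the potential of a vertex set is its total weight minus
four times the number of edges it spans. The bound on the average degree says that every nonempty
set has positive potential when all vertices are free, and this positivity alone yields a partition
respecting the labels. In a minimal counterexample, contracting a set of small potential to an
independent vertex joined to one more labelled vertex gives a smaller instance; so proper subsets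
have large potential, which makes configurations with many vertices of degree two reducible.
Discharging along threads then shows that the potential of the whole graph is not positive.
-/

namespace StarColoring

open Finset
open scoped Classical

variable {V : Type*} {G : SimpleGraph V}

/-- The neighbours of `v` inside `B`; its size is the degree of `v` into `B`. -/
noncomputable def nbrsIn (G : SimpleGraph V) (v : V) (B : Finset V) : Finset V :=
  {y ∈ B | G.Adj v y}

/-- The number of ordered adjacent pairs in `A × B`, so that `dartCount G A A` is twice the number
of edges induced by `A`. -/
noncomputable def dartCount (G : SimpleGraph V) (A B : Finset V) : ℕ :=
  #(G.interedges A B)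

@[simp]
theorem mem_nbrsIn {v y : V} {B : Finset V} : y ∈ nbrsIn G v B ↔ y ∈ B ∧ G.Adj v y :=
  mem_filter

theorem nbrsIn_subset (v : V) (B : Finset V) : nbrsIn G v B ⊆ B :=
  filter_subset _ _

theorem card_nbrsIn_mono (v : V) {B C : Finset V} (h : B ⊆ C) :
    #(nbrsIn G v B) ≤ #(nbrsIn G v C) :=
  card_le_card (filter_subset_filter _ h)

theorem card_nbrsIn_union (v : V) {B C : Finset V} (h : Disjoint B C) :
    #(nbrsIn G v (B ∪ C)) = #(nbrsIn G v B) + #(nbrsIn G v C) := by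
  rw [nbrsIn, filter_union, card_union_of_disjoint (disjoint_filter_filter h)]
  rfl

theorem nbrsIn_singleton_self (v : V) : nbrsIn G v {v} = ∅ := by
  simp [nbrsIn, filter_singleton]

theorem card_nbrsIn_pos {v x : V} {B : Finset V} (hx : x ∈ B) (h : G.Adj v x) :
    0 < #(nbrsIn G v B) :=
  card_pos.2 ⟨x, mem_nbrsIn.2 ⟨hx, h⟩⟩

theorem one_lt_card_nbrsIn {v x y : V} {B : Finset V} (hx : x ∈ B) (hvx : G.Adj v x) (hy : y ∈ B)
    (hvy : G.Adj v y) (hxy : x ≠ y) : 1 < #(nbrsIn G v B) :=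
  one_lt_card.2 ⟨x, mem_nbrsIn.2 ⟨hx, hvx⟩, y, mem_nbrsIn.2 ⟨hy, hvy⟩, hxy⟩

theorem card_nbrsIn_le_one {v x : V} {B : Finset V} (h : ∀ y ∈ B, G.Adj v y → y = x) :
    #(nbrsIn G v B) ≤ 1 :=
  (card_le_card fun _ hy ↦ mem_singleton.2 (h _ (mem_nbrsIn.1 hy).1 (mem_nbrsIn.1 hy).2)).trans
    (card_singleton x).le

theorem dartCount_eq_sum (A B : Finset V) :
    dartCount G A B = ∑ v ∈ A, #(nbrsIn G v B) := by
  simp only [dartCount, interedges_def, card_filter, sum_product, nbrsIn]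

theorem dartCount_comm (A B : Finset V) : dartCount G A B = dartCount G B A :=
  have := G.symm
  Rel.card_interedges_comm A B

theorem dartCount_singleton_left (v : V) (B : Finset V) :
    dartCount G {v} B = #(nbrsIn G v B) := by
  simp [dartCount_eq_sum]

theorem dartCount_union_left {A B : Finset V} (C : Finset V) (h : Disjoint A B) :
    dartCount G (A ∪ B) C = dartCount G A C + dartCount G B C := by
  simp only [dartCount_eq_sum, sum_union h]

theorem dartCount_union_right (C : Finset V) {A B : Finset V} (h : Disjoint A B) :
    dartCount G C (A ∪ B) = dartCount G C A + dartCount G C B := by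
  rw [dartCount_comm, dartCount_union_left _ h, dartCount_comm A, dartCount_comm B]

theorem dartCount_le_of_adj_imp {G' : SimpleGraph V} {B : Finset V}
    (h : ∀ x ∈ B, ∀ y ∈ B, G.Adj x y → G'.Adj x y) : dartCount G B B ≤ dartCount G' B B := by
  refine card_le_card fun p hp ↦ ?_
  simp only [mem_interedges_iff] at hp ⊢
  exact ⟨hp.1, hp.2.1, h _ hp.1 _ hp.2.1 hp.2.2⟩

theorem dartCount_union_self {A B : Finset V} (h : Disjoint A B) :
    dartCount G (A ∪ B) (A ∪ B) = dartCount G A A + dartCount G B B + 2 * dartCount G A B := by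
  rw [dartCount_union_left _ h, dartCount_union_right _ h, dartCount_union_right _ h,
    dartCount_comm B A]
  ring

theorem dartCount_insert_self {v : V} {B : Finset V} (h : v ∉ B) :
    dartCount G (insert v B) (insert v B) = dartCount G B B + 2 * #(nbrsIn G v B) := by
  rw [insert_eq, dartCount_union_self (by simpa using h), dartCount_singleton_left,
    dartCount_singleton_left, nbrsIn_singleton_self, card_empty, zero_add]

theorem even_dartCount_self (B : Finset V) : Even (dartCount G B B) := by
  induction B using Finset.induction_on with
  | empty => simp [dartCount_eq_sum]
  | insert v B hv ih => rw [dartCount_insert_self hv]; exact ih.add (even_two_mul _)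

/-- `Y` induces a forest in `G`, encoded by the edge counts: every nonempty `B ⊆ Y` spans at most
`#B - 1` edges. -/
def IsForestOn (G : SimpleGraph V) (Y : Finset V) : Prop :=
  ∀ B ⊆ Y, B.Nonempty → dartCount G B B + 2 ≤ 2 * #B

theorem IsForestOn.mono {Y Z : Finset V} (h : IsForestOn G Y) (hZ : Z ⊆ Y) : IsForestOn G Z :=
  fun B hB ↦ h B (hB.trans hZ)

protected theorem IsForestOn.insert {Y : Finset V} {v : V} (h : IsForestOn G Y)
    (hv : #(nbrsIn G v Y) ≤ 1) : IsForestOn G (insert v Y) := by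
  intro B hB hne
  by_cases hvB : v ∈ B
  · have hB' : B.erase v ⊆ Y := by grind
    have hcard := card_erase_add_one hvB
    have hnbrs := card_nbrsIn_mono (G := G) v hB'
    have hdart := dartCount_insert_self (G := G) (notMem_erase v B)
    rw [insert_erase hvB] at hdart
    obtain hB0 | hne' := (B.erase v).eq_empty_or_nonempty
    · simp only [hB0, nbrsIn, filter_empty, card_empty, dartCount_eq_sum, sum_empty] at *
      omega
    · have := h _ hB' hne'
      omega
  · exact h B ((subset_insert_iff_of_notMem hvB).1 hB) hne

protected theorem IsForestOn.union {Y K : Finset V} (h : IsForestOn G Y)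
    (hK : ∀ a ∈ K, #(nbrsIn G a (Y ∪ K)) ≤ 1) : IsForestOn G (Y ∪ K) := by
  induction K using Finset.induction_on with
  | empty => simpa using h
  | insert v K _ ih =>
    have hsub : Y ∪ K ⊆ Y ∪ insert v K := union_subset_union_right (subset_insert v K)
    rw [union_insert]
    exact (ih fun a ha ↦ (card_nbrsIn_mono a hsub).trans (hK a (mem_insert_of_mem ha))).insert
      ((card_nbrsIn_mono v hsub).trans (hK v (mem_insert_self v K)))

/-- The labels of a partially prescribed partition: `indep` vertices must go to the 2-independent
part, `forest` vertices to the forest part, `free` vertices are unconstrained. -/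
inductive Label
  | indep
  | forest
  | free

/-- The contribution of a labelled vertex to the potential. -/
def Label.weight : Label → ℤ
  | indep => 1
  | forest => 4
  | free => 5

theorem Label.weight_pos (l : Label) : 0 < l.weight := by
  cases l <;> simp [weight]

theorem Label.weight_le_five (l : Label) : l.weight ≤ 5 := by
  cases l <;> simp [weight]

variable {ℓ ℓ' : V → Label} {X Y A B S : Finset V}

/-- `S` and `X \ S` are the 2-independent and the forest part of a partition of `G[X]` which
respects the labels `ℓ`. -/
structure IsIFPartitionOn (G : SimpleGraph V) (ℓ : V → Label) (X S : Finset V) : Prop where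
  subset : S ⊆ X
  mem_of_indep : ∀ v ∈ X, ℓ v = .indep → v ∈ S
  notMem_of_forest : ∀ v ∈ X, ℓ v = .forest → v ∉ S
  isForestOn : IsForestOn G (X \ S)
  not_adj : ∀ s ∈ S, ∀ t ∈ S, ¬ G.Adj s t
  eq_of_adj : ∀ z ∈ X, ∀ s ∈ S, ∀ t ∈ S, G.Adj z s → G.Adj z t → s = t

theorem IsIFPartitionOn.relabel (h : IsIFPartitionOn G ℓ' X S)
    (hℓ : ∀ v ∈ X, ℓ v ≠ .free → ℓ' v = ℓ v) : IsIFPartitionOn G ℓ X S where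
  subset := h.subset
  mem_of_indep v hv hi := h.mem_of_indep v hv ((hℓ v hv (by simp [hi])).trans hi)
  notMem_of_forest v hv hf := h.notMem_of_forest v hv ((hℓ v hv (by simp [hf])).trans hf)
  isForestOn := h.isForestOn
  not_adj := h.not_adj
  eq_of_adj := h.eq_of_adj

/-- The potential of the subgraph induced by `A`: the weights of its vertices minus four times its
number of edges. -/
noncomputable def potential (G : SimpleGraph V) (ℓ : V → Label) (A : Finset V) : ℤ :=
  ∑ v ∈ A, (ℓ v).weight - 2 * dartCount G A A

theorem potential_congr (h : ∀ v ∈ A, ℓ v = ℓ' v) : potential G ℓ A = potential G ℓ' A := by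
  rw [potential, potential, sum_congr rfl fun v hv ↦ by rw [h v hv]]

theorem potential_union (h : Disjoint A B) :
    potential G ℓ (A ∪ B) = potential G ℓ A + potential G ℓ B - 4 * dartCount G A B := by
  simp only [potential, dartCount_union_self h, sum_union h]
  push_cast
  ring

theorem potential_insert {v : V} (h : v ∉ A) :
    potential G ℓ (insert v A) = potential G ℓ A + (ℓ v).weight - 4 * #(nbrsIn G v A) := by
  simp only [potential, dartCount_insert_self h, sum_insert h]
  push_cast
  ring

theorem potential_singleton (v : V) : potential G ℓ {v} = (ℓ v).weight := by
  simp [potential, dartCount_singleton_left, nbrsIn_singleton_self]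

/-- Every nonempty subset of `X` has positive potential. -/
def Sparse (G : SimpleGraph V) (ℓ : V → Label) (X : Finset V) : Prop :=
  ∀ A ⊆ X, A.Nonempty → 0 < potential G ℓ A

theorem Sparse.mono (h : Sparse G ℓ X) (hY : Y ⊆ X) : Sparse G ℓ Y :=
  fun A hA ↦ h A (hA.trans hY)

theorem Sparse.not_adj_of_indep (h : Sparse G ℓ X) {s t : V} (hs : s ∈ X) (ht : t ∈ X)
    (hℓs : ℓ s = .indep) (hℓt : ℓ t = .indep) : ¬ G.Adj s t := by
  intro hst
  have hpos := h {s, t} (by grind) (by simp)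
  rw [potential_insert (by simpa using hst.ne), potential_singleton, hℓs, hℓt] at hpos
  have := card_nbrsIn_pos (mem_singleton_self t) hst
  grind [Label.weight]

theorem Sparse.eq_of_adj_indep (h : Sparse G ℓ X) {s t z : V} (hz : z ∈ X) (hs : s ∈ X)
    (ht : t ∈ X) (hℓs : ℓ s = .indep) (hℓt : ℓ t = .indep) (hzs : G.Adj z s) (hzt : G.Adj z t) :
    s = t := by
  by_contra hst
  have hpos := h {z, s, t} (by grind) (by simp)
  rw [potential_insert (by simp [hzs.ne, hzt.ne]), potential_insert (by simpa using hst),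
    potential_singleton, hℓs, hℓt] at hpos
  have := one_lt_card_nbrsIn (B := {s, t}) (by simp) hzs (by simp) hzt hst
  have := (ℓ z).weight_le_five
  grind [Label.weight]

theorem Sparse.isIFPartitionOn_of_no_free (h : Sparse G ℓ X) (hX : ∀ v ∈ X, ℓ v ≠ .free) :
    IsIFPartitionOn G ℓ X {v ∈ X | ℓ v = .indep} where
  subset := filter_subset _ _
  mem_of_indep := by simp +contextual
  notMem_of_forest := by simp +contextual
  isForestOn B hB hne := by
    have hpos := h B (hB.trans sdiff_subset) hne
    have hforest : ∀ v ∈ B, (ℓ v).weight = 4 := fun v hv ↦ by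
      have hvX := mem_sdiff.1 (hB hv)
      have := hX v hvX.1
      cases hv : ℓ v <;> simp_all [Label.weight]
    rw [potential, sum_congr rfl hforest, sum_const, nsmul_eq_mul] at hpos
    obtain ⟨k, hk⟩ := even_dartCount_self (G := G) B
    omega
  not_adj s hs t ht := by
    rw [mem_filter] at hs ht
    exact h.not_adj_of_indep hs.1 ht.1 hs.2 ht.2
  eq_of_adj z hz s hs t ht := by
    rw [mem_filter] at hs ht
    exact h.eq_of_adj_indep hz hs.1 ht.1 hs.2 ht.2

theorem Sparse.card_nbrsIn_le_one (h : Sparse G ℓ X) (hA : A ⊆ X) (hρ : potential G ℓ A ≤ 3)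
    {x : V} (hx : x ∈ X \ A) : #(nbrsIn G x A) ≤ 1 := by
  rw [mem_sdiff] at hx
  have hpos := h (insert x A) (insert_subset hx.1 hA) (insert_nonempty x A)
  rw [potential_insert hx.2] at hpos
  have := (ℓ x).weight_le_five
  omega

/-- Relabels the free vertices of `T` as forest vertices. -/
noncomputable def markForest (ℓ : V → Label) (T : Finset V) (v : V) : Label :=
  if v ∈ T ∧ ℓ v = .free then .forest else ℓ v

theorem markForest_of_ne_free {T : Finset V} {v : V} (h : ℓ v ≠ .free) :
    markForest ℓ T v = ℓ v := by
  simp [markForest, h]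

theorem markForest_eq_free {T : Finset V} {v : V} :
    markForest ℓ T v = .free ↔ ℓ v = .free ∧ v ∉ T := by
  grind [markForest]

theorem weight_markForest (T : Finset V) (v : V) :
    (markForest ℓ T v).weight = (ℓ v).weight - if v ∈ T ∧ ℓ v = .free then 1 else 0 := by
  grind [markForest, Label.weight]

theorem potential_markForest (T A : Finset V) :
    potential G (markForest ℓ T) A = potential G ℓ A - #{v ∈ A | v ∈ T ∧ ℓ v = .free} := by
  simp only [potential, weight_markForest, sum_sub_distrib, sum_boole]
  ring

theorem IsIFPartitionOn.of_markForest {T : Finset V}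
    (h : IsIFPartitionOn G (markForest ℓ T) X S) : IsIFPartitionOn G ℓ X S :=
  h.relabel fun _ _ ↦ markForest_of_ne_free

theorem IsIFPartitionOn.notMem_of_markForest {T : Finset V}
    (h : IsIFPartitionOn G (markForest ℓ T) X S) {v : V} (hX : v ∈ X) (hT : v ∈ T)
    (hℓ : ℓ v ≠ .indep) : v ∉ S := by
  refine h.notMem_of_forest v hX ?_
  cases hv : ℓ v <;> simp_all [markForest]

theorem card_filter_mem_singleton_le_one (z : V) (P : V → Prop) :
    #{x ∈ A | x ∈ ({z} : Finset V) ∧ P x} ≤ 1 :=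
  card_le_one.2 fun x hx y hy ↦ by grind

/-- The measure on labelled graphs on which the proof inducts. -/
noncomputable def complexity (ℓ : V → Label) (X : Finset V) : ℕ :=
  #X + #{v ∈ X | ℓ v = .free}

theorem complexity_lt_of_ssubset (hXY : Y ⊂ X) (hℓ : ∀ v ∈ Y, ℓ' v = .free → ℓ v = .free) :
    complexity ℓ' Y < complexity ℓ X :=
  add_lt_add_of_lt_of_le (card_lt_card hXY) (card_le_card fun v hv ↦ by
    rw [mem_filter] at hv ⊢
    exact ⟨hXY.1 hv.1, hℓ v hv.1 hv.2⟩)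

theorem complexity_markForest_le (T : Finset V) : complexity (markForest ℓ T) X ≤ complexity ℓ X :=
  Nat.add_le_add_left (card_le_card fun v hv ↦ by
    simp only [mem_filter, markForest_eq_free] at hv ⊢
    exact ⟨hv.1, hv.2.1⟩) _

theorem complexity_markForest_lt {v : V} (hv : v ∈ X) (hℓ : ℓ v = .free) :
    complexity (markForest ℓ {v}) X < complexity ℓ X := by
  refine Nat.add_lt_add_left (card_lt_card ⟨fun x hx ↦ ?_, fun h ↦ ?_⟩) _
  · simp only [mem_filter, markForest_eq_free] at hx ⊢
    exact ⟨hx.1, hx.2.1⟩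
  · have := h (mem_filter.2 ⟨hv, hℓ⟩)
    simp [markForest_eq_free] at this

theorem complexity_union (h : Disjoint A B) :
    complexity ℓ (A ∪ B) = complexity ℓ A + complexity ℓ B := by
  rw [complexity, filter_union, card_union_of_disjoint h,
    card_union_of_disjoint (disjoint_filter_filter h), complexity, complexity]
  ring

theorem complexity_congr (h : ∀ v ∈ A, ℓ v = ℓ' v) : complexity ℓ A = complexity ℓ' A := by
  rw [complexity, complexity, filter_congr fun v hv ↦ by rw [h v hv]]

theorem card_lt_complexity {v : V} (hv : v ∈ A) (hℓ : ℓ v = .free) : #A < complexity ℓ A :=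
  Nat.lt_add_of_pos_right (card_pos.2 ⟨v, mem_filter.2 ⟨hv, hℓ⟩⟩)

/-- A sparse labelled graph `G[X]` without a suitable partition, although all sparse labelled graphs
of smaller complexity on the same vertex type have one. -/
structure MinimalBad (G : SimpleGraph V) (ℓ : V → Label) (X : Finset V) : Prop where
  sparse : Sparse G ℓ X
  exists_of_lt : ∀ (G' : SimpleGraph V) (ℓ' : V → Label) (X' : Finset V),
    complexity ℓ' X' < complexity ℓ X → Sparse G' ℓ' X' → ∃ S, IsIFPartitionOn G' ℓ' X' S
  not_isIFPartitionOn : ∀ S, ¬ IsIFPartitionOn G ℓ X S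

theorem card_nbrsIn_le_dartCount {G' : SimpleGraph V} {v : V} {B T : Finset V}
    (h : ∀ x ∈ B, G'.Adj v x → ∃ t ∈ T, G.Adj x t) : #(nbrsIn G' v B) ≤ dartCount G B T := by
  rw [nbrsIn, card_filter, dartCount_eq_sum]
  refine sum_le_sum fun x hx ↦ ?_
  split_ifs with hvx
  · obtain ⟨t, ht, hxt⟩ := h x hx hvx
    exact card_nbrsIn_pos ht hxt
  · exact Nat.zero_le _

theorem dartCount_le_card_nbrsIn {G' : SimpleGraph V} {v : V} {B T : Finset V}
    (hone : ∀ x ∈ B, #(nbrsIn G x T) ≤ 1) (h : ∀ x ∈ B, ∀ t ∈ T, G.Adj x t → G'.Adj v x) :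
    dartCount G B T ≤ #(nbrsIn G' v B) := by
  rw [nbrsIn, card_filter, dartCount_eq_sum]
  refine sum_le_sum fun x hx ↦ ?_
  split_ifs with hvx
  · exact hone x hx
  · rw [Nat.le_zero, card_eq_zero, eq_empty_iff_forall_notMem]
    intro t ht
    rw [mem_nbrsIn] at ht
    exact hvx (h x hx t ht.1 ht.2)

/-- The vertex map which contracts `S` to `i` and `A \ S` to `u`. -/
noncomputable def collapse (A S : Finset V) (i u x : V) : V :=
  if x ∈ S then i else if x ∈ A then u else x

/-- The graph obtained from `G` by contracting `S ⊆ A` to `i` and `A \ S` to `u`, and joining `i`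
to `u`. -/
noncomputable def contract (G : SimpleGraph V) (A S : Finset V) (i u : V) : SimpleGraph V :=
  G.map (collapse A S i u) ⊔ edge i u

section Contract

variable {i u : V}

theorem collapse_mem_iff {S' : Finset V} {x : V} (hi : i ∈ S') (hu : u ∉ S') (hS : S ⊆ A) :
    collapse A S i u x ∈ S' ↔ x ∈ (S' \ A) ∪ S := by
  grind [collapse]

theorem collapse_mem {x : V} (hx : x ∈ X) : collapse A S i u x ∈ (X \ A) ∪ {i, u} := by
  grind [collapse]

theorem eq_or_mem_of_collapse_eq {S' : Finset V} {x y : V} (hi : i ∈ A)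
    (hx : x ∈ (S' \ A) ∪ S) (hy : y ∈ (S' \ A) ∪ S)
    (h : collapse A S i u x = collapse A S i u y) : x = y ∨ x ∈ S ∧ y ∈ S := by
  grind [collapse]

theorem contract_adj_of_adj {x y : V} (hxy : G.Adj x y)
    (hne : collapse A S i u x ≠ collapse A S i u y) :
    (contract G A S i u).Adj (collapse A S i u x) (collapse A S i u y) :=
  .inl ((map_adj' _ _ _ _).2 ⟨hne, x, y, hxy, rfl, rfl⟩)

theorem contract_adj_pair (hiu : i ≠ u) : (contract G A S i u).Adj i u :=
  .inr ((edge_adj ..).2 ⟨.inl ⟨rfl, rfl⟩, hiu⟩)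

theorem exists_adj_of_contract_adj (hi : i ∈ A) (hu : u ∈ A) {x y : V} (hx : x ∉ A)
    (h : (contract G A S i u).Adj x y) : ∃ t, G.Adj x t ∧ collapse A S i u t = y := by
  obtain ⟨-, v, t, hvt, hv, ht⟩ | h := h
  · obtain rfl : v = x := by grind [collapse]
    exact ⟨t, hvt, ht⟩
  · grind

theorem dartCount_contract_of_disjoint (hi : i ∈ A) (hu : u ∈ A) (hS : S ⊆ A)
    (hB : Disjoint B A) : dartCount (contract G A S i u) B B = dartCount G B B := by
  rw [Finset.disjoint_left] at hB
  have hfix : ∀ x ∈ B, collapse A S i u x = x := by grind [collapse]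
  refine le_antisymm (dartCount_le_of_adj_imp fun x hx y hy hxy ↦ ?_)
    (dartCount_le_of_adj_imp fun x hx y hy hxy ↦ ?_)
  · obtain ⟨t, hxt, ht⟩ := exists_adj_of_contract_adj hi hu (hB hx) hxy
    obtain rfl : t = y := by grind [collapse]
    exact hxt
  · have := contract_adj_of_adj (A := A) (S := S) (i := i) (u := u) hxy
    rw [hfix x hx, hfix y hy] at this
    exact this hxy.ne

theorem potential_contract_of_disjoint (hi : i ∈ A) (hu : u ∈ A) (hS : S ⊆ A)
    (hB : Disjoint B A) (hℓ : ∀ v ∉ A, ℓ' v = ℓ v) :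
    potential (contract G A S i u) ℓ' B = potential G ℓ B := by
  rw [potential, dartCount_contract_of_disjoint hi hu hS hB,
    sum_congr rfl fun v hv ↦ by rw [hℓ v (Finset.disjoint_left.1 hB hv)], potential]

theorem card_nbrsIn_contract_left (hi : i ∈ A) (hu : u ∈ A) (hiu : i ≠ u) (hB : Disjoint B A) :
    #(nbrsIn (contract G A S i u) i B) ≤ dartCount G B S := by
  refine card_nbrsIn_le_dartCount fun x hx hix ↦ ?_
  obtain ⟨t, hxt, ht⟩ :=
    exists_adj_of_contract_adj hi hu (Finset.disjoint_left.1 hB hx) hix.symm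
  exact ⟨t, by grind [collapse], hxt⟩

theorem card_nbrsIn_contract_right (hi : i ∈ A) (hu : u ∈ A) (hiu : i ≠ u) (hB : Disjoint B A) :
    #(nbrsIn (contract G A S i u) u B) ≤ dartCount G B (A \ S) := by
  refine card_nbrsIn_le_dartCount fun x hx hux ↦ ?_
  obtain ⟨t, hxt, ht⟩ :=
    exists_adj_of_contract_adj hi hu (Finset.disjoint_left.1 hB hx) hux.symm
  exact ⟨t, by grind [collapse], hxt⟩

protected theorem Sparse.contract (h : Sparse G ℓ X) (hA : A ⊆ X) (hS : S ⊆ A) (hi : i ∈ A)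
    (hu : u ∈ A) (hiu : i ≠ u) (hℓ : ∀ v ∉ A, ℓ' v = ℓ v) (hℓi : ℓ' i = .indep)
    (hℓu : (ℓ' u).weight = 3 + potential G ℓ A)
    (hB : ∀ B ⊆ X \ A, potential G ℓ A ≤ potential G ℓ (B ∪ A) + 4 * dartCount G B (A \ S)) :
    Sparse (contract G A S i u) ℓ' ((X \ A) ∪ {i, u}) := by
  intro C hC hne
  set B := C \ A
  have hBX : B ⊆ X \ A := by grind
  have hBA : Disjoint B A := sdiff_disjoint
  have hiB : i ∉ B := by grind
  have huB : u ∉ B := by grind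
  have hpos := h (B ∪ A) (by grind) ⟨i, mem_union_right _ hi⟩
  have hbound := hB B hBX
  have hsplit := dartCount_union_right (G := G) B (disjoint_sdiff (s := S) (t := A))
  rw [union_sdiff_of_subset hS] at hsplit
  have hunion := potential_union (G := G) (ℓ := ℓ) hBA
  have hnbrs_i := card_nbrsIn_contract_left (G := G) (S := S) hi hu hiu hBA
  have hnbrs_u := card_nbrsIn_contract_right (G := G) (S := S) hi hu hiu hBA
  have hρB := potential_contract_of_disjoint (G := G) hi hu hS hBA hℓ
  have hwi : (ℓ' i).weight = 1 := by rw [hℓi, Label.weight]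
  have hins_i := potential_insert (G := contract G A S i u) (ℓ := ℓ') hiB
  have hins_u := potential_insert (G := contract G A S i u) (ℓ := ℓ') huB
  by_cases hiC : i ∈ C <;> by_cases huC : u ∈ C
  · have hC' : C = insert i (insert u B) := by grind
    have hiu_edge : #(nbrsIn (contract G A S i u) i (insert u B)) ≤
        #(nbrsIn (contract G A S i u) i B) + 1 := by
      rw [insert_eq, union_comm, card_nbrsIn_union _ (by simpa using huB)]
      exact Nat.add_le_add_left (card_le_card (nbrsIn_subset i {u})) _
    rw [hC', potential_insert (by grind)]
    omega
  · rw [show C = insert i B by grind]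
    omega
  · rw [show C = insert u B by grind]
    omega
  · have hC' : C = B := by grind
    rw [hC', hρB]
    exact h B (hBX.trans sdiff_subset) (hC' ▸ hne)

theorem IsForestOn.of_contract {F' : Finset V} (hi : i ∈ A) (hu : u ∈ A) (hS : S ⊆ A)
    (hA : IsForestOn G (A \ S)) (huF : u ∈ F') (hF' : IsForestOn (contract G A S i u) F')
    (hone : ∀ x ∈ F' \ A, #(nbrsIn G x A) ≤ 1) :
    IsForestOn G ((F' \ A) ∪ (A \ S)) := by
  intro B hB hne
  have hBA : Disjoint (B \ A) A := sdiff_disjoint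
  have hd : Disjoint (B \ A) (B ∩ A) := hBA.mono_right inter_subset_right
  have hBe : (B \ A) ∪ (B ∩ A) = B := sdiff_union_inter B A
  have hBF : B \ A ⊆ F' := by grind
  have hdart := dartCount_contract_of_disjoint (G := G) hi hu hS hBA
  obtain he | hneA := (B ∩ A).eq_empty_or_nonempty
  · rw [he, union_empty] at hBe
    rw [hBe] at hBF hdart
    rw [← hdart]
    exact hF' B hBF hne
  have huB : u ∉ B \ A := by simp [hu]
  have hBu := hF' (insert u (B \ A)) (insert_subset huF hBF) (insert_nonempty _ _)
  rw [dartCount_insert_self huB, hdart, card_insert_of_notMem huB] at hBu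
  have hBSA : B ∩ A ⊆ A \ S := by grind
  have hin := hA (B ∩ A) hBSA hneA
  have hcross : dartCount G (B \ A) (B ∩ A) ≤ #(nbrsIn (contract G A S i u) u (B \ A)) := by
    refine dartCount_le_card_nbrsIn (fun x hx ↦ ?_) fun x hx t ht hxt ↦ ?_
    · exact (card_nbrsIn_mono x inter_subset_right).trans (hone x (by grind))
    · have hct : collapse A S i u t = u := by grind [collapse]
      have hcx : collapse A S i u x = x := by grind [collapse]
      have hadj := contract_adj_of_adj (A := A) (S := S) (i := i) (u := u) hxt
      rw [hct, hcx] at hadj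
      exact (hadj (by grind)).symm
  have hdB := dartCount_union_self (G := G) hd
  have hcard := card_union_of_disjoint hd
  rw [hBe] at hdB hcard
  omega

theorem IsIFPartitionOn.of_contract {S' : Finset V} (hA : A ⊆ X) (hS : IsIFPartitionOn G ℓ A S)
    (hi : i ∈ A) (hu : u ∈ A) (hiu : i ≠ u) (hone : ∀ x ∈ X \ A, #(nbrsIn G x A) ≤ 1)
    (hℓ : ∀ v ∉ A, ℓ' v = ℓ v) (hℓi : ℓ' i = .indep)
    (hS' : IsIFPartitionOn (contract G A S i u) ℓ' ((X \ A) ∪ {i, u}) S') :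
    IsIFPartitionOn G ℓ X ((S' \ A) ∪ S) := by
  have hSA := hS.subset
  have hS'X := hS'.subset
  have hiS' : i ∈ S' := hS'.mem_of_indep i (by simp) hℓi
  have huS' : u ∉ S' := fun huS' ↦ hS'.not_adj i hiS' u huS' (contract_adj_pair hiu)
  have hforest := IsForestOn.of_contract (F' := ((X \ A) ∪ {i, u}) \ S') hi hu hSA
    hS.isForestOn (by simp [huS']) hS'.isForestOn fun x hx ↦ hone x (by grind)
  have hmem (v) : collapse A S i u v ∈ S' ↔ v ∈ (S' \ A) ∪ S := collapse_mem_iff hiS' huS' hSA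
  generalize hT : (S' \ A) ∪ S = T at *
  have hfiber : ∀ s ∈ T, ∀ t ∈ T, collapse A S i u s = collapse A S i u t →
      s = t ∨ s ∈ S ∧ t ∈ S := hT ▸ fun s hs t ht ↦ eq_or_mem_of_collapse_eq hi hs ht
  have hnot_adj : ∀ s ∈ T, ∀ t ∈ T, ¬ G.Adj s t := by
    intro s hs t ht hst
    by_cases heq : collapse A S i u s = collapse A S i u t
    · obtain rfl | hmemS := hfiber s hs t ht heq
      · exact hst.ne rfl
      · exact hS.not_adj s hmemS.1 t hmemS.2 hst
    · exact hS'.not_adj _ ((hmem s).2 hs) _ ((hmem t).2 ht) (contract_adj_of_adj hst heq)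
  refine ⟨by grind, ?_, ?_, hforest.mono (by grind), hnot_adj, ?_⟩
  · have hSi := hS.mem_of_indep
    have hS'i := hS'.mem_of_indep
    grind
  · have hSf := hS.notMem_of_forest
    have hS'f := hS'.notMem_of_forest
    grind
  · intro z hz s hs t ht hzs hzt
    by_contra hst
    have hne : ∀ y ∈ T, G.Adj z y → collapse A S i u z ≠ collapse A S i u y := fun y hy hzy heq ↦
      hnot_adj z ((hmem z).1 (heq ▸ (hmem y).2 hy)) y hy hzy
    have heq := hS'.eq_of_adj _ (collapse_mem hz) _ ((hmem s).2 hs) _ ((hmem t).2 ht)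
      (contract_adj_of_adj hzs (hne s hs hzs)) (contract_adj_of_adj hzt (hne t ht hzt))
    have hmemS := (hfiber s hs t ht heq).resolve_left hst
    by_cases hzA : z ∈ A
    · exact hst (hS.eq_of_adj z hzA s hmemS.1 t hmemS.2 hzs hzt)
    · have := one_lt_card_nbrsIn (hSA hmemS.1) hzs (hSA hmemS.2) hzt hst
      exact this.not_ge (hone z (mem_sdiff.2 ⟨hz, hzA⟩))

end Contract

/-- Contracting `A` to an independent vertex and a vertex with label `l` yields a smaller sparse
labelled graph, whose partitions lift. -/
theorem MinimalBad.complexity_le_of_contract (h : MinimalBad G ℓ X) (hA : A ⊆ X)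
    (hS : IsIFPartitionOn G ℓ A S) (hA1 : 1 < #A) (l : Label)
    (hl : l.weight = 3 + potential G ℓ A)
    (hB : ∀ B ⊆ X \ A, potential G ℓ A ≤ potential G ℓ (B ∪ A) + 4 * dartCount G B (A \ S)) :
    complexity ℓ A ≤ if l = .free then 3 else 2 := by
  obtain ⟨i, hi, u, hu, hiu⟩ := one_lt_card.1 hA1
  let ℓ' := Function.update (Function.update ℓ u l) i .indep
  have hℓ : ∀ v ∉ A, ℓ' v = ℓ v := fun v hv ↦ by
    simp only [ℓ', Function.update_apply]
    grind
  have hℓi : ℓ' i = .indep := by simp [ℓ']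
  have hℓu : ℓ' u = l := by simp [ℓ', hiu.symm]
  by_contra! hlt
  have hpair : complexity ℓ' {i, u} = if l = .free then 3 else 2 := by
    simp only [complexity, card_pair hiu, filter_insert, filter_singleton, hℓi, hℓu]
    split_ifs <;> simp_all
  have hcomplexity : complexity ℓ' ((X \ A) ∪ {i, u}) < complexity ℓ X := by
    have hX := complexity_union (ℓ := ℓ) (sdiff_disjoint (s := A) (t := X))
    rw [sdiff_union_of_subset hA] at hX
    rw [complexity_union (by grind [Finset.disjoint_left]), hpair,
      complexity_congr (A := X \ A) fun v hv ↦ hℓ v (mem_sdiff.1 hv).2]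
    omega
  obtain ⟨S', hS'⟩ := h.exists_of_lt _ ℓ' _ hcomplexity
    (h.sparse.contract hA hS.subset hi hu hiu hℓ hℓi (by rw [hℓu, hl]) hB)
  have hρ : potential G ℓ A ≤ 3 := by linarith [l.weight_le_five]
  exact h.not_isIFPartitionOn _ (IsIFPartitionOn.of_contract hA hS hi hu hiu
    (fun x hx ↦ h.sparse.card_nbrsIn_le_one hA hρ hx) hℓ hℓi hS')

theorem IsForestOn.union_of_not_adj {K : Finset V} (hY : IsForestOn G Y) (hK : IsForestOn G K)
    (h : ∀ y ∈ Y, ∀ k ∈ K, ¬ G.Adj y k) : IsForestOn G (Y ∪ K) := by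
  intro B hB hne
  have hd : Disjoint (B ∩ Y) (B \ Y) := disjoint_sdiff.mono_left inter_subset_right
  have hBe : (B ∩ Y) ∪ (B \ Y) = B :=
    (union_comm _ _).trans (sdiff_union_inter B Y)
  have hBK : B \ Y ⊆ K := by grind
  have hcross : dartCount G (B ∩ Y) (B \ Y) = 0 := by
    rw [dartCount_eq_sum]
    refine sum_eq_zero fun v hv ↦ card_eq_zero.2 (eq_empty_of_forall_notMem fun x hx ↦ ?_)
    rw [mem_nbrsIn] at hx
    exact h v (mem_inter.1 hv).2 x (hBK hx.1) hx.2
  have hdart := dartCount_union_self (G := G) hd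
  have hcard := card_union_of_disjoint hd
  rw [hBe] at hdart hcard
  obtain he | hne₁ := (B ∩ Y).eq_empty_or_nonempty
  · rw [he, empty_union] at hBe
    exact hK B (hBe ▸ hBK) hne
  obtain he | hne₂ := (B \ Y).eq_empty_or_nonempty
  · exact hY B (sdiff_eq_empty_iff_subset.1 he) hne
  have := hY _ inter_subset_right hne₁
  have := hK _ hBK hne₂
  omega

section Glue

variable {T : Finset V}

theorem IsIFPartitionOn.mem_left_of_adj (hS : IsIFPartitionOn G ℓ A S)
    (hT : IsIFPartitionOn G ℓ Y T) (hI : ∀ x ∈ A ∩ Y, ℓ x = .indep)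
    (hE : ∀ x ∈ A \ Y, ∀ y ∈ Y \ A, ¬ G.Adj x y) {z s : V} (hz : z ∈ A) (hs : s ∈ S ∪ T)
    (hzs : G.Adj z s) : s ∈ S := by
  obtain hs | hs := mem_union.1 hs
  · exact hs
  have hsY := hT.subset hs
  by_cases hsA : s ∈ A
  · exact hS.mem_of_indep s hsA (hI s (mem_inter.2 ⟨hsA, hsY⟩))
  by_cases hzY : z ∈ Y
  · exact absurd hzs (hT.not_adj z (hT.mem_of_indep z hzY (hI z (mem_inter.2 ⟨hz, hzY⟩))) s hs)
  · exact absurd hzs (hE z (mem_sdiff.2 ⟨hz, hzY⟩) s (mem_sdiff.2 ⟨hsY, hsA⟩))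

theorem IsIFPartitionOn.mem_right_of_adj (hS : IsIFPartitionOn G ℓ A S)
    (hT : IsIFPartitionOn G ℓ Y T) (hI : ∀ x ∈ A ∩ Y, ℓ x = .indep)
    (hE : ∀ x ∈ A \ Y, ∀ y ∈ Y \ A, ¬ G.Adj x y) {z s : V} (hz : z ∈ Y) (hs : s ∈ S ∪ T)
    (hzs : G.Adj z s) : s ∈ T :=
  hT.mem_left_of_adj hS (inter_comm A Y ▸ hI) (fun x hx y hy hxy ↦ hE y hy x hx hxy.symm) hz
    (union_comm S T ▸ hs) hzs

protected theorem IsIFPartitionOn.union (hS : IsIFPartitionOn G ℓ A S)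
    (hT : IsIFPartitionOn G ℓ Y T) (hI : ∀ x ∈ A ∩ Y, ℓ x = .indep)
    (hE : ∀ x ∈ A \ Y, ∀ y ∈ Y \ A, ¬ G.Adj x y) : IsIFPartitionOn G ℓ (A ∪ Y) (S ∪ T) where
  subset := union_subset_union hS.subset hT.subset
  mem_of_indep v hv hℓ := by
    have := hS.mem_of_indep v
    have := hT.mem_of_indep v
    grind
  notMem_of_forest v hv hℓ := by
    have := hS.notMem_of_forest v
    have := hT.notMem_of_forest v
    have := hS.subset
    have := hT.subset
    grind
  isForestOn := by
    have hIS : ∀ x ∈ A, x ∈ Y → x ∈ S ∧ x ∈ T := fun x hA hY ↦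
      have hℓ := hI x (mem_inter.2 ⟨hA, hY⟩)
      ⟨hS.mem_of_indep x hA hℓ, hT.mem_of_indep x hY hℓ⟩
    refine (hS.isForestOn.union_of_not_adj hT.isForestOn fun x hx y hy ↦
      hE x ?_ y ?_).mono ?_ <;> grind
  not_adj s hs t ht hst := by
    obtain hsS | hsT := mem_union.1 hs
    · exact hS.not_adj s hsS t (hS.mem_left_of_adj hT hI hE (hS.subset hsS) ht hst) hst
    · exact hT.not_adj s hsT t (hS.mem_right_of_adj hT hI hE (hT.subset hsT) ht hst) hst
  eq_of_adj z hz s hs t ht hzs hzt := by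
    obtain hzA | hzY := mem_union.1 hz
    · exact hS.eq_of_adj z hzA s (hS.mem_left_of_adj hT hI hE hzA hs hzs) t
        (hS.mem_left_of_adj hT hI hE hzA ht hzt) hzs hzt
    · exact hT.eq_of_adj z hzY s (hS.mem_right_of_adj hT hI hE hzY hs hzs) t
        (hS.mem_right_of_adj hT hI hE hzY ht hzt) hzs hzt

end Glue

namespace MinimalBad

variable {v z : V}

theorem exists_partition_of_ssubset (h : MinimalBad G ℓ X) (hA : A ⊂ X) :
    ∃ S, IsIFPartitionOn G ℓ A S :=
  h.exists_of_lt G ℓ A (complexity_lt_of_ssubset hA fun _ _ ↦ id) (h.sparse.mono hA.1)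

theorem exists_partition_avoiding {G' : SimpleGraph V} (h : MinimalBad G ℓ X)
    (hY : complexity ℓ' Y < complexity ℓ X) (T : Finset V)
    (hpos : ∀ A ⊆ Y, A.Nonempty → #{x ∈ A | x ∈ T ∧ ℓ' x = .free} < potential G' ℓ' A) :
    ∃ S, IsIFPartitionOn G' ℓ' Y S ∧ ∀ v ∈ Y, v ∈ T → ℓ' v ≠ .indep → v ∉ S := by
  obtain ⟨S, hS⟩ := h.exists_of_lt G' (markForest ℓ' T) Y
    ((complexity_markForest_le T).trans_lt hY) fun A hA hne ↦ by
      rw [potential_markForest]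
      exact sub_pos.2 (hpos A hA hne)
  exact ⟨S, hS.of_markForest, fun v hv hT hℓ ↦ hS.notMem_of_markForest hv hT hℓ⟩

theorem two_le_potential (h : MinimalBad G ℓ X) (hA : A ⊂ X) (hz : z ∈ A) (hℓ : ℓ z = .free) :
    2 ≤ potential G ℓ A := by
  by_contra hlt
  have hpos := h.sparse A hA.1 ⟨z, hz⟩
  have hρ : potential G ℓ A = 1 := by omega
  have hcard : 1 < #A := by
    by_contra hle
    rw [(eq_singleton_iff_unique_mem.2 ⟨hz, fun x hx ↦ card_le_one.1 (not_lt.1 hle) x hx z hz⟩ :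
      A = {z}), potential_singleton, hℓ, Label.weight] at hρ
    omega
  obtain ⟨S, hS⟩ := h.exists_partition_of_ssubset hA
  have hle := h.complexity_le_of_contract hA.1 hS hcard .forest (by simp [hρ, Label.weight])
    fun B hB ↦ by
      have := h.sparse (B ∪ A) (union_subset (hB.trans sdiff_subset) hA.1)
        ⟨z, mem_union_right _ hz⟩
      omega
  rw [if_neg (by simp)] at hle
  have := card_lt_complexity hz hℓ
  omega

theorem exists_free (h : MinimalBad G ℓ X) : ∃ z ∈ X, ℓ z = .free := by
  by_contra! hX
  exact h.not_isIFPartitionOn _ (h.sparse.isIFPartitionOn_of_no_free hX)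

theorem card_filter_singleton_lt_potential (h : MinimalBad G ℓ X) (hA : A ⊂ X) (hne : A.Nonempty)
    (z : V) : #{x ∈ A | x ∈ ({z} : Finset V) ∧ ℓ x = .free} < potential G ℓ A := by
  have hpos := h.sparse A hA.1 hne
  by_cases hz : z ∈ A ∧ ℓ z = .free
  · have := h.two_le_potential hA hz.1 hz.2
    have := card_filter_mem_singleton_le_one (A := A) z (ℓ · = .free)
    omega
  · rw [filter_false_of_mem (by grind)]
    exact hpos

theorem exists_partition_notMem (h : MinimalBad G ℓ X) (hA : A ⊂ X) (hz : z ∈ A)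
    (hℓ : ℓ z ≠ .indep) : ∃ S, IsIFPartitionOn G ℓ A S ∧ z ∉ S := by
  obtain ⟨S, hS, hzS⟩ := h.exists_partition_avoiding
    (complexity_lt_of_ssubset hA fun _ _ ↦ id) {z}
    fun B hB hne ↦ h.card_filter_singleton_lt_potential (hB.trans_ssubset hA) hne z
  exact ⟨S, hS, hzS z hz (mem_singleton_self z) hℓ⟩

theorem potential_eq_one (h : MinimalBad G ℓ X) : potential G ℓ X = 1 := by
  obtain ⟨z, hz, hℓ⟩ := h.exists_free
  by_contra hne
  have hpos := h.sparse X Subset.rfl ⟨z, hz⟩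
  obtain ⟨S, hS⟩ := h.exists_of_lt G (markForest ℓ {z}) X (complexity_markForest_lt hz hℓ)
    fun A hA hneA ↦ by
      rw [potential_markForest, sub_pos]
      obtain rfl | hAX := eq_or_ssubset_of_subset hA
      · have := card_filter_mem_singleton_le_one (A := A) z (ℓ · = .free)
        omega
      · exact h.card_filter_singleton_lt_potential hAX hneA z
  exact h.not_isIFPartitionOn S hS.of_markForest

theorem exists_adj_outside (h : MinimalBad G ℓ X) (hA : A ⊂ X) (hz : z ∈ A) (hℓ : ℓ z ≠ .indep) :
    ∃ v ∈ A, ℓ v ≠ .indep ∧ ∃ x ∈ X \ A, G.Adj x v := by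
  by_contra! hE
  let Y : Finset V := {v ∈ X | v ∈ A → ℓ v = .indep}
  have hY : Y ⊂ X := filter_ssubset.2 ⟨z, hA.1 hz, by simp [hz, hℓ]⟩
  obtain ⟨S, hS⟩ := h.exists_partition_of_ssubset hA
  obtain ⟨T, hT⟩ := h.exists_partition_of_ssubset hY
  have hST := hS.union hT (by grind) fun x hx y hy hxy ↦ hE x (by grind) (by grind) y (by grind)
    hxy.symm
  rw [show A ∪ Y = X by have := hA.1; grind] at hST
  exact h.not_isIFPartitionOn _ hST

theorem three_le_potential (h : MinimalBad G ℓ X) (hA : A ⊂ X) (hz : z ∈ A) (hℓ : ℓ z = .free)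
    (hcard : 3 ≤ #A) : 3 ≤ potential G ℓ A := by
  by_contra hlt
  have hρ : potential G ℓ A = 2 := by have := h.two_le_potential hA hz hℓ; omega
  obtain ⟨v, hv, hℓv, x, hx, hxv⟩ := h.exists_adj_outside hA hz (by simp [hℓ])
  obtain ⟨S, hS, hvS⟩ := h.exists_partition_notMem hA hv hℓv
  have hle := h.complexity_le_of_contract hA.1 hS (by omega) .free (by simp [hρ, Label.weight])
    fun B hB ↦ by
      have hBX : B ∪ A ⊆ X := union_subset (hB.trans sdiff_subset) hA.1
      obtain he | hlt := eq_or_ssubset_of_subset hBX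
      · have hxB : x ∈ B := by grind
        have hdart : 0 < dartCount G B (A \ S) := (card_nbrsIn_pos (by grind) hxv).trans_le <|
          dartCount_eq_sum (G := G) .. ▸
            single_le_sum (f := fun x ↦ #(nbrsIn G x (A \ S))) (fun _ _ ↦ Nat.zero_le _) hxB
        have := h.potential_eq_one
        rw [he]
        omega
      · have := h.two_le_potential hlt (mem_union_right _ hz) hℓ
        omega
  rw [if_pos rfl] at hle
  have := card_lt_complexity hz hℓ
  omega

end MinimalBad

theorem mem_and_adj_of_nbrsIn_eq {v x : V} {N : Finset V} (h : nbrsIn G v X = N) (hx : x ∈ N) :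
    x ∈ X ∧ G.Adj v x :=
  mem_nbrsIn.1 (h ▸ hx)

theorem mem_of_nbrsIn_eq {v x : V} {N : Finset V} (h : nbrsIn G v X = N) (hx : x ∈ X)
    (hvx : G.Adj v x) : x ∈ N :=
  h ▸ mem_nbrsIn.2 ⟨hx, hvx⟩

section Extend

variable {D : Finset V}

theorem IsIFPartitionOn.extend (h : IsIFPartitionOn G ℓ (X \ D) S) (hD : ∀ d ∈ D, ℓ d ≠ .indep)
    (hF : IsForestOn G (X \ S))
    (heq : ∀ d ∈ D, ∀ s ∈ S, ∀ t ∈ S, G.Adj d s → G.Adj d t → s = t) :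
    IsIFPartitionOn G ℓ X S where
  subset := h.subset.trans sdiff_subset
  mem_of_indep v hv hℓ := h.mem_of_indep v (mem_sdiff.2 ⟨hv, fun hd ↦ hD v hd hℓ⟩) hℓ
  notMem_of_forest v _ hℓ hvS := h.notMem_of_forest v (h.subset hvS) hℓ hvS
  isForestOn := hF
  not_adj := h.not_adj
  eq_of_adj z hz s hs t ht := by
    by_cases hzD : z ∈ D
    · exact heq z hzD s hs t ht
    · exact h.eq_of_adj z (mem_sdiff.2 ⟨hz, hzD⟩) s hs t ht

theorem IsIFPartitionOn.extend_insert {v : V} (h : IsIFPartitionOn G ℓ (X \ D) S)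
    (hD : ∀ d ∈ D, ℓ d ≠ .indep) (hvX : v ∈ X) (hv : v ∈ D) (hℓ : ℓ v = .free)
    (hF : IsForestOn G (X \ insert v S))
    (hfar : ∀ y ∈ X, G.Adj v y → y ∉ S ∧ ∀ s ∈ S, ¬ G.Adj y s)
    (heq : ∀ d ∈ D, ∀ s ∈ S, ∀ t ∈ S, G.Adj d s → G.Adj d t → s = t) :
    IsIFPartitionOn G ℓ X (insert v S) where
  subset := insert_subset hvX (h.subset.trans sdiff_subset)
  mem_of_indep x hx hℓx :=
    mem_insert_of_mem (h.mem_of_indep x (mem_sdiff.2 ⟨hx, fun hd ↦ hD x hd hℓx⟩) hℓx)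
  notMem_of_forest x _ hℓx hxS := by
    obtain rfl | hxS := mem_insert.1 hxS
    · simp [hℓ] at hℓx
    · exact h.notMem_of_forest x (h.subset hxS) hℓx hxS
  isForestOn := hF
  not_adj := by
    have hvS : ∀ s ∈ S, ¬ G.Adj v s := fun s hs hvs ↦
      (hfar s (sdiff_subset (h.subset hs)) hvs).1 hs
    rintro s hs t ht hst
    obtain rfl | hsS := mem_insert.1 hs <;> obtain rfl | htS := mem_insert.1 ht
    · exact hst.ne rfl
    · exact hvS t htS hst
    · exact hvS s hsS hst.symm
    · exact h.not_adj s hsS t htS hst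
  eq_of_adj z hz s hs t ht hzs hzt := by
    obtain rfl | hsS := mem_insert.1 hs <;> obtain rfl | htS := mem_insert.1 ht
    · rfl
    · exact ((hfar z hz hzs.symm).2 t htS hzt).elim
    · exact ((hfar z hz hzt.symm).2 s hsS hzs).elim
    · by_cases hzD : z ∈ D
      · exact heq z hzD s hsS t htS hzs hzt
      · exact h.eq_of_adj z (mem_sdiff.2 ⟨hz, hzD⟩) s hsS t htS hzs hzt

end Extend

namespace MinimalBad

variable {v a b p : V}

theorem two_le_card_nbrsIn (h : MinimalBad G ℓ X) (hv : v ∈ X) (hℓ : ℓ v ≠ .indep) :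
    2 ≤ #(nbrsIn G v X) := by
  by_contra! hlt
  obtain ⟨S, hS⟩ := h.exists_partition_of_ssubset (erase_ssubset hv)
  rw [← sdiff_singleton_eq_erase] at hS
  have hSX : S ⊆ X := hS.subset.trans sdiff_subset
  refine h.not_isIFPartitionOn S (hS.extend (by simpa using hℓ) ?_ ?_)
  · exact (hS.isForestOn.insert ((card_nbrsIn_mono v (sdiff_subset.trans sdiff_subset)).trans
      (Nat.le_of_lt_succ hlt))).mono (by grind)
  · intro d hd s hs t ht hds hdt
    obtain rfl := mem_singleton.1 hd
    exact card_le_one.1 (Nat.le_of_lt_succ hlt) s (mem_nbrsIn.2 ⟨hSX hs, hds⟩) t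
      (mem_nbrsIn.2 ⟨hSX ht, hdt⟩)

theorem ne_of_nbrsIn_eq_pair (h : MinimalBad G ℓ X) (hv : v ∈ X) (hℓ : ℓ v ≠ .indep)
    (nv : nbrsIn G v X = {a, b}) : a ≠ b := by
  rintro rfl
  have := h.two_le_card_nbrsIn hv hℓ
  simp [nv] at this

theorem ne_indep_of_nbrsIn_eq_pair (h : MinimalBad G ℓ X) (ha : a ∈ X) (hℓ : ℓ a ≠ .indep)
    (na : nbrsIn G a X = {p, v}) : ℓ p ≠ .indep := by
  intro hℓp
  have hpv := h.ne_of_nbrsIn_eq_pair ha hℓ na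
  obtain ⟨hp, hap⟩ := mem_and_adj_of_nbrsIn_eq na (x := p) (by simp)
  obtain ⟨hv, hav⟩ := mem_and_adj_of_nbrsIn_eq na (x := v) (by simp)
  have hℓv : ℓ v ≠ .indep := fun hℓv ↦ hpv (h.sparse.eq_of_adj_indep ha hp hv hℓp hℓv hap hav)
  have hnbr := fun y ↦ mem_of_nbrsIn_eq na (x := y)
  obtain ⟨S, hS, hvS⟩ := h.exists_partition_notMem (A := X \ {a}) (z := v)
    (sdiff_ssubset (by simpa) (by simp)) (by grind [hav.ne]) hℓv
  have hSX := hS.subset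
  have hpS : p ∈ S := hS.mem_of_indep p (by grind [hap.ne]) hℓp
  refine h.not_isIFPartitionOn S (hS.extend (by simpa using hℓ) ?_ (by grind))
  exact (hS.isForestOn.insert (v := a) (card_nbrsIn_le_one (x := v) (by grind))).mono (by grind)

end MinimalBad

theorem IsIFPartitionOn.extend_path_of_mem {v a b a' b' : V} (hℓv : ℓ v ≠ .indep)
    (hℓa : ℓ a ≠ .indep) (hℓb : ℓ b ≠ .indep) (nv : nbrsIn G v X = {a, b})
    (na : nbrsIn G a X = {v, a'}) (nb : nbrsIn G b X = {v, b'})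
    (hS : IsIFPartitionOn G ℓ (X \ {v, a, b}) S) (haS : a' ∈ S) : IsIFPartitionOn G ℓ X S := by
  have hbX := (mem_and_adj_of_nbrsIn_eq nv (x := b) (by simp)).1
  have hv := fun y ↦ mem_of_nbrsIn_eq nv (x := y)
  have ha := fun y ↦ mem_of_nbrsIn_eq na (x := y)
  have hb := fun y ↦ mem_of_nbrsIn_eq nb (x := y)
  have hSX := hS.subset
  refine hS.extend (by grind) ?_ (by grind)
  refine (((hS.isForestOn.insert (v := b) ?_).insert (v := v) ?_).insert (v := a) ?_).mono
    (by grind)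
  · exact card_nbrsIn_le_one (x := b') (by grind)
  · exact card_nbrsIn_le_one (x := b) (by grind)
  · exact card_nbrsIn_le_one (x := v) (by grind)

namespace MinimalBad

variable {v a b c p z a' b' : V}

/-- The middle vertex `v` can join the independent part unless one of the outer neighbours
`a'`, `b'` already lies in it. -/
theorem not_three_thread (h : MinimalBad G ℓ X) (hv : v ∈ X) (hℓv : ℓ v = .free)
    (hℓa : ℓ a ≠ .indep) (hℓb : ℓ b ≠ .indep) (nv : nbrsIn G v X = {a, b})
    (na : nbrsIn G a X = {v, a'}) (nb : nbrsIn G b X = {v, b'}) : False := by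
  obtain ⟨haX, hva⟩ := mem_and_adj_of_nbrsIn_eq nv (x := a) (by simp)
  obtain ⟨hbX, hvb⟩ := mem_and_adj_of_nbrsIn_eq nv (x := b) (by simp)
  obtain ⟨S, hS⟩ := h.exists_partition_of_ssubset (A := X \ {v, a, b})
    (sdiff_ssubset (by grind) (by simp))
  by_cases haS : a' ∈ S
  · exact h.not_isIFPartitionOn S
      (.extend_path_of_mem (by simp [hℓv]) hℓa hℓb nv na nb hS haS)
  by_cases hbS : b' ∈ S
  · rw [pair_comm] at hS nv
    exact h.not_isIFPartitionOn S
      (.extend_path_of_mem (by simp [hℓv]) hℓb hℓa nv nb na hS hbS)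
  have hnv := fun y ↦ mem_of_nbrsIn_eq nv (x := y)
  have hna := fun y ↦ mem_of_nbrsIn_eq na (x := y)
  have hnb := fun y ↦ mem_of_nbrsIn_eq nb (x := y)
  have hSX := hS.subset
  have := hva.ne
  have := hvb.ne
  refine h.not_isIFPartitionOn _
    (hS.extend_insert (v := v) (by grind) hv (by simp) hℓv ?_ (by grind) (by grind))
  refine ((hS.isForestOn.insert (v := b) ?_).insert (v := a) ?_).mono (by grind)
  · exact card_nbrsIn_le_one (x := b') (by grind)
  · exact card_nbrsIn_le_one (x := a') (by grind)

theorem not_triangle (h : MinimalBad G ℓ X) (hp : p ∈ X) (hza : z ≠ a) (hzb : z ≠ b)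
    (hℓp : ℓ p ≠ .indep) (hℓa : ℓ a = .free) (hℓb : ℓ b ≠ .indep)
    (np : nbrsIn G p X = {a, b, z}) (na : nbrsIn G a X = {p, b}) (nb : nbrsIn G b X = {a, p}) :
    False := by
  obtain ⟨haX, hpa⟩ := mem_and_adj_of_nbrsIn_eq np (x := a) (by simp)
  obtain ⟨hbX, hpb⟩ := mem_and_adj_of_nbrsIn_eq np (x := b) (by simp)
  obtain ⟨hzX, hpz⟩ := mem_and_adj_of_nbrsIn_eq np (x := z) (by simp)
  have hab := (mem_and_adj_of_nbrsIn_eq na (x := b) (by simp)).2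
  have hne : p ≠ a ∧ p ≠ b ∧ a ≠ b ∧ p ≠ z := ⟨hpa.ne, hpb.ne, hab.ne, hpz.ne⟩
  have hℓz : ℓ z ≠ .indep := by
    intro hℓz
    have hpos := h.sparse {b, a, p, z} (by grind) (by simp)
    rw [potential_insert (by grind), potential_insert (by grind), potential_insert (by grind),
      potential_singleton, hℓz, Label.weight, hℓa, Label.weight] at hpos
    have := one_lt_card_nbrsIn (B := {a, p, z}) (by simp) hab.symm (by simp) hpb.symm hpa.ne'
    have := card_nbrsIn_pos (B := {p, z}) (by simp) hpa.symm
    have := card_nbrsIn_pos (mem_singleton_self z) hpz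
    have := (ℓ p).weight_le_five
    have := (ℓ b).weight_le_five
    omega
  obtain ⟨S, hS, hzS⟩ := h.exists_partition_notMem (A := X \ {p, a, b}) (z := z)
    (sdiff_ssubset (by grind) (by simp)) (by grind) hℓz
  have hnp := fun y ↦ mem_of_nbrsIn_eq np (x := y)
  have hna := fun y ↦ mem_of_nbrsIn_eq na (x := y)
  have hnb := fun y ↦ mem_of_nbrsIn_eq nb (x := y)
  have hSX := hS.subset
  refine h.not_isIFPartitionOn _
    (hS.extend_insert (v := a) (by grind) haX (by simp) hℓa ?_ (by grind) (by grind))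
  refine ((hS.isForestOn.insert (v := p) ?_).insert (v := b) ?_).mono (by grind)
  · exact card_nbrsIn_le_one (x := z) (by grind)
  · exact card_nbrsIn_le_one (x := p) (by grind)

theorem not_four_cycle (h : MinimalBad G ℓ X) (hp : p ∈ X) (hza : z ≠ a) (hzc : z ≠ c) (hzb : z ≠ b)
    (hℓp : ℓ p ≠ .indep) (hℓa : ℓ a = .free) (hℓb : ℓ b ≠ .indep) (hℓc : ℓ c ≠ .indep)
    (hℓz : ℓ z ≠ .indep) (np : nbrsIn G p X = {a, c, z}) (na : nbrsIn G a X = {p, b})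
    (nb : nbrsIn G b X = {a, c}) (nc : nbrsIn G c X = {p, b}) : False := by
  obtain ⟨haX, hpa⟩ := mem_and_adj_of_nbrsIn_eq np (x := a) (by simp)
  obtain ⟨hcX, hpc⟩ := mem_and_adj_of_nbrsIn_eq np (x := c) (by simp)
  obtain ⟨hzX, hpz⟩ := mem_and_adj_of_nbrsIn_eq np (x := z) (by simp)
  obtain ⟨hbX, hab⟩ := mem_and_adj_of_nbrsIn_eq na (x := b) (by simp)
  have hbc := (mem_and_adj_of_nbrsIn_eq nb (x := c) (by simp)).2
  have hne : p ≠ a ∧ p ≠ c ∧ a ≠ b ∧ p ≠ z ∧ b ≠ c :=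
    ⟨hpa.ne, hpc.ne, hab.ne, hpz.ne, hbc.ne⟩
  obtain ⟨S, hS, hzS⟩ := h.exists_partition_notMem (A := X \ {p, a, b, c}) (z := z)
    (sdiff_ssubset (by grind) (by simp)) (by grind) hℓz
  have hnp := fun y ↦ mem_of_nbrsIn_eq np (x := y)
  have hna := fun y ↦ mem_of_nbrsIn_eq na (x := y)
  have hnb := fun y ↦ mem_of_nbrsIn_eq nb (x := y)
  have hnc := fun y ↦ mem_of_nbrsIn_eq nc (x := y)
  have hSX := hS.subset
  refine h.not_isIFPartitionOn _
    (hS.extend_insert (v := a) (by grind) haX (by simp) hℓa ?_ (by grind) (by grind))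
  refine (((hS.isForestOn.insert (v := p) ?_).insert (v := c) ?_).insert (v := b) ?_).mono
    (by grind)
  · exact card_nbrsIn_le_one (x := z) (by grind)
  · exact card_nbrsIn_le_one (x := p) (by grind)
  · exact card_nbrsIn_le_one (x := c) (by grind)

end MinimalBad

section SupEdge

variable {p r c : V}

theorem dartCount_sup_edge_of_notMem_left (hp : p ∉ B) :
    dartCount (G ⊔ edge p r) B B = dartCount G B B := by
  refine le_antisymm (dartCount_le_of_adj_imp fun x hx y hy hxy ↦ ?_)
    (dartCount_le_of_adj_imp fun x _ y _ ↦ .inl)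
  rw [sup_adj, edge_adj] at hxy
  grind

theorem dartCount_sup_edge_of_notMem_right (hr : r ∉ B) :
    dartCount (G ⊔ edge p r) B B = dartCount G B B := by
  rw [edge_comm, dartCount_sup_edge_of_notMem_left hr]

theorem dartCount_sup_edge (hpr : p ≠ r) (hn : ¬ G.Adj p r) (hp : p ∈ B) (hr : r ∈ B) :
    dartCount (G ⊔ edge p r) B B = dartCount G B B + 2 := by
  have hpB := notMem_erase p B
  have hnbrs : nbrsIn (G ⊔ edge p r) p (B.erase p) = insert r (nbrsIn G p (B.erase p)) := by
    ext y
    simp only [mem_nbrsIn, sup_adj, edge_adj, mem_insert]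
    grind
  rw [← insert_erase hp, dartCount_insert_self hpB, dartCount_insert_self hpB,
    dartCount_sup_edge_of_notMem_left hpB, hnbrs, card_insert_of_notMem (by simp [hn])]
  ring

theorem IsForestOn.anti {G' : SimpleGraph V} (hG : G ≤ G') (h : IsForestOn G' Y) :
    IsForestOn G Y := fun B hB hne ↦ by
  have := dartCount_le_of_adj_imp (B := B) fun x _ y _ hxy ↦ hG hxy
  have := h B hB hne
  omega

theorem IsIFPartitionOn.anti {G' : SimpleGraph V} (hG : G ≤ G') (h : IsIFPartitionOn G' ℓ X S) :
    IsIFPartitionOn G ℓ X S where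
  __ := h
  isForestOn := h.isForestOn.anti hG
  not_adj s hs t ht hst := h.not_adj s hs t ht (hG hst)
  eq_of_adj z hz s hs t ht hzs hzt := h.eq_of_adj z hz s hs t ht (hG hzs) (hG hzt)

/-- Subdividing the edge `pr` by the new vertex `c` keeps a forest acyclic. -/
theorem IsForestOn.insert_of_sup_edge (hpr : p ≠ r) (hn : ¬ G.Adj p r)
    (h : IsForestOn (G ⊔ edge p r) Y) (hc : ∀ y ∈ Y, G.Adj c y → y = p ∨ y = r) :
    IsForestOn G (insert c Y) := by
  intro B hB hne
  have hBY : B.erase c ⊆ Y := by grind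
  by_cases hcB : c ∈ B
  · have hnbrs : nbrsIn G c (B.erase c) ⊆ {p, r} := fun y hy ↦ by
      rw [mem_nbrsIn] at hy
      simpa using hc y (hBY hy.1) hy.2
    rw [← insert_erase hcB, dartCount_insert_self (notMem_erase c B),
      card_insert_of_notMem (notMem_erase c B)]
    obtain he | hne' := (B.erase c).eq_empty_or_nonempty
    · simp [he, dartCount, nbrsIn]
    have hlt := h _ hBY hne'
    by_cases hpB : p ∈ B.erase c
    · by_cases hrB : r ∈ B.erase c
      · rw [dartCount_sup_edge hpr hn hpB hrB] at hlt
        have := card_le_card hnbrs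
        rw [card_pair hpr] at this
        omega
      · rw [dartCount_sup_edge_of_notMem_right hrB] at hlt
        have : #(nbrsIn G c (B.erase c)) ≤ 1 := card_nbrsIn_le_one (x := p) (by grind)
        omega
    · rw [dartCount_sup_edge_of_notMem_left hpB] at hlt
      have : #(nbrsIn G c (B.erase c)) ≤ 1 := card_nbrsIn_le_one (x := r) (by grind)
      omega
  · exact h.anti le_sup_left B (erase_eq_of_notMem hcB ▸ hBY) hne

theorem IsIFPartitionOn.exists_of_sup_edge {a b q z : V}
    (hS' : IsIFPartitionOn (G ⊔ edge p r) ℓ (X \ {a, b, c}) S) (hzS : z ∉ S) (hpr : p ≠ r)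
    (hnpr : ¬ G.Adj p r) (hac : a ≠ c) (hbc : b ≠ c) (hpb : p ≠ b) (hzb : z ≠ b) (hqc : q ≠ c)
    (hra : r ≠ a) (hrb : r ≠ b) (hℓa : ℓ a = .free) (hℓb : ℓ b ≠ .indep) (hℓc : ℓ c ≠ .indep)
    (np : nbrsIn G p X = {a, c, z}) (na : nbrsIn G a X = {p, b}) (nb : nbrsIn G b X = {a, q})
    (nc : nbrsIn G c X = {p, r}) : ∃ T, IsIFPartitionOn G ℓ X T := by
  obtain ⟨haX, hpa⟩ := mem_and_adj_of_nbrsIn_eq np (x := a) (by simp)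
  obtain ⟨hbX, hab⟩ := mem_and_adj_of_nbrsIn_eq na (x := b) (by simp)
  obtain ⟨hcX, hpc⟩ := mem_and_adj_of_nbrsIn_eq np (x := c) (by simp)
  obtain ⟨hrX, hcr⟩ := mem_and_adj_of_nbrsIn_eq nc (x := r) (by simp)
  have hpX := (mem_and_adj_of_nbrsIn_eq na (x := p) (by simp)).1
  have hne : p ≠ a ∧ p ≠ c ∧ a ≠ b ∧ c ≠ r := ⟨hpa.ne, hpc.ne, hab.ne, hcr.ne⟩
  have hnp := fun y ↦ mem_of_nbrsIn_eq np (x := y)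
  have hna := fun y ↦ mem_of_nbrsIn_eq na (x := y)
  have hnb := fun y ↦ mem_of_nbrsIn_eq nb (x := y)
  have hnc := fun y ↦ mem_of_nbrsIn_eq nc (x := y)
  have hS := hS'.anti le_sup_left
  have hSX := hS.subset
  have hF := hS'.isForestOn.insert_of_sup_edge (c := c) hpr hnpr (by grind)
  have hSa : ∀ s ∈ S, G.Adj a s → s = p := by grind
  have hSb : ∀ s ∈ S, G.Adj b s → s = q := by grind
  have hSc : ∀ s ∈ S, G.Adj c s → s = p ∨ s = r := by grind
  have hSp : ∀ s ∈ S, ¬ G.Adj p s := by grind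
  by_cases hpS : p ∈ S
  · have hrS : r ∉ S := fun hrS ↦ hS'.not_adj p hpS r hrS (.inr ((edge_adj ..).2 ⟨by simp, hpr⟩))
    refine ⟨S, hS.extend (by grind) ?_ (by grind)⟩
    refine ((hF.insert (v := b) ?_).insert (v := a) ?_).mono (by grind)
    · exact card_nbrsIn_le_one (x := q) (by grind)
    · exact card_nbrsIn_le_one (x := b) (by grind)
  by_cases hqS : q ∈ S
  · refine ⟨S, hS.extend (by grind) ?_ (by grind)⟩
    refine ((hF.insert (v := a) ?_).insert (v := b) ?_).mono (by grind)
    · exact card_nbrsIn_le_one (x := p) (by grind)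
    · exact card_nbrsIn_le_one (x := a) (by grind)
  · have hfar : ∀ y ∈ X, G.Adj a y → y ∉ S ∧ ∀ s ∈ S, ¬ G.Adj y s := fun y hy hay ↦ by
      obtain rfl | rfl : y = p ∨ y = b := by simpa using hna y hy hay
      · exact ⟨hpS, hSp⟩
      · exact ⟨by grind, by grind⟩
    refine ⟨_, hS.extend_insert (v := a) (by grind) haX (by simp) hℓa ?_ hfar (by grind)⟩
    refine (hF.insert (v := b) ?_).mono (by grind)
    exact card_nbrsIn_le_one (x := q) (by grind)

end SupEdge

theorem potential_update_indep {z : V} (hz : z ∈ A) (hℓ : ℓ z = .free) :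
    potential G (Function.update ℓ z .indep) A = potential G ℓ A - 4 := by
  rw [← insert_erase hz, potential_insert (notMem_erase z A), potential_insert (notMem_erase z A),
    Function.update_self, hℓ, potential_congr (ℓ' := ℓ) fun v hv ↦
      Function.update_of_ne (ne_of_mem_erase hv) _ _, Label.weight, Label.weight]
  ring

namespace MinimalBad

variable {a b c p q r z : V}

theorem card_filter_singleton_lt_potential_sup_edge (h : MinimalBad G ℓ X) (hpr : p ≠ r)
    (hn : ¬ G.Adj p r) (hcp : G.Adj c p) (hcr : G.Adj c r) (hℓ : ℓ c = .free) (hcA : c ∉ A)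
    (hA : insert c A ⊂ X) (hne : A.Nonempty) (z : V) :
    #{x ∈ A | x ∈ ({z} : Finset V) ∧ ℓ x = .free} < potential (G ⊔ edge p r) ℓ A := by
  have hlt := h.card_filter_singleton_lt_potential ((subset_insert c A).trans_ssubset hA) hne z
  rw [potential] at hlt ⊢
  by_cases hpA : p ∈ A
  · by_cases hrA : r ∈ A
    · have hρ := h.three_le_potential hA (mem_insert_self c A) hℓ (by
        have := one_lt_card.2 ⟨p, hpA, r, hrA, hpr⟩
        rw [card_insert_of_notMem hcA]
        omega)
      rw [potential_insert hcA, hℓ, Label.weight, potential] at hρ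
      have := one_lt_card_nbrsIn hpA hcp hrA hcr hpr
      have := card_filter_mem_singleton_le_one (A := A) z (ℓ · = .free)
      rw [dartCount_sup_edge hpr hn hpA hrA]
      omega
    · rwa [dartCount_sup_edge_of_notMem_right hrA]
  · rwa [dartCount_sup_edge_of_notMem_left hpA]

theorem exists_partition_sup_edge (h : MinimalBad G ℓ X) (hpr : p ≠ r) (hn : ¬ G.Adj p r)
    (hcp : G.Adj c p) (hcr : G.Adj c r) (hℓ : ℓ c = .free) (hcY : c ∉ Y) (hY : insert c Y ⊂ X)
    (hz : z ∈ Y) (hℓz : ℓ z ≠ .indep) :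
    ∃ S, IsIFPartitionOn (G ⊔ edge p r) ℓ Y S ∧ z ∉ S := by
  obtain ⟨S, hS, hzS⟩ := h.exists_partition_avoiding (G' := G ⊔ edge p r)
    (complexity_lt_of_ssubset ((subset_insert c Y).trans_ssubset hY) fun _ _ ↦ id) {z}
    fun A hA hne ↦ h.card_filter_singleton_lt_potential_sup_edge hpr hn hcp hcr hℓ
      (fun hcA ↦ hcY (hA hcA)) ((insert_subset_insert c hA).trans_ssubset hY) hne z
  exact ⟨S, hS, hzS z hz (mem_singleton_self z) hℓz⟩

theorem five_le_potential_of_triangle (h : MinimalBad G ℓ X) (hpc : G.Adj p c) (hpz : G.Adj p z)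
    (hcz : G.Adj c z) (hℓ : ℓ c = .free) (hpA : p ∉ A) (hcA : c ∉ A) (hzA : z ∈ A)
    (hA : insert c (insert p A) ⊂ X) : 5 ≤ potential G ℓ A := by
  have hcA' : c ∉ insert p A := by simp [hcA, hpc.ne']
  have hρ := h.three_le_potential hA (mem_insert_self _ _) hℓ (by
    have := card_pos.2 ⟨z, hzA⟩
    rw [card_insert_of_notMem hcA', card_insert_of_notMem hpA]
    omega)
  rw [potential_insert hcA', potential_insert hpA, hℓ, Label.weight] at hρ
  have := one_lt_card_nbrsIn (mem_insert_self p A) hpc.symm (mem_insert_of_mem hzA) hcz hpz.ne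
  have := card_nbrsIn_pos hzA hpz
  have := (ℓ p).weight_le_five
  omega

theorem free_of_triangle (h : MinimalBad G ℓ X) (hpc : G.Adj p c) (hpz : G.Adj p z)
    (hcz : G.Adj c z) (hℓ : ℓ c = .free) (hX : {c, p, z} ⊂ X) : ℓ z = .free := by
  have hρ := h.five_le_potential_of_triangle hpc hpz hcz hℓ (by simpa using hpz.ne)
    (by simpa using hcz.ne) (mem_singleton_self z) hX
  rw [potential_singleton] at hρ
  cases hz : ℓ z <;> simp_all [Label.weight]

theorem exists_partition_mem (h : MinimalBad G ℓ X) (hY : Y ⊂ X) (hz : z ∈ Y) (hℓ : ℓ z = .free)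
    (hρ : ∀ A ⊆ Y, z ∈ A → 5 ≤ potential G ℓ A) : ∃ S, IsIFPartitionOn G ℓ Y S ∧ z ∈ S := by
  obtain ⟨S, hS⟩ := h.exists_of_lt G (Function.update ℓ z .indep) Y
    (complexity_lt_of_ssubset hY fun v _ ↦ by grind) fun A hA hne ↦ by
      by_cases hzA : z ∈ A
      · rw [potential_update_indep hzA hℓ]
        have := hρ A hA hzA
        omega
      · rw [potential_congr (ℓ' := ℓ) fun v hv ↦ Function.update_of_ne (by grind) _ _]
        exact h.sparse A (hA.trans hY.1) hne
  exact ⟨S, hS.relabel fun v _ hv ↦ by grind, hS.mem_of_indep z hz (Function.update_self ..)⟩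

theorem exists_partition_mem_of_triangle (h : MinimalBad G ℓ X) (hpc : G.Adj p c)
    (hpz : G.Adj p z) (hcz : G.Adj c z) (hℓ : ℓ c = .free) (hp : p ∉ Y) (hc : c ∉ Y) (hz : z ∈ Y)
    (hY : insert c (insert p Y) ⊂ X) : ∃ S, IsIFPartitionOn G ℓ Y S ∧ z ∈ S := by
  have hsub : ∀ A ⊆ Y, insert c (insert p A) ⊂ X := fun A hA ↦
    (insert_subset_insert c (insert_subset_insert p hA)).trans_ssubset hY
  refine h.exists_partition_mem (((subset_insert p Y).trans (subset_insert c _)).trans_ssubset hY)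
    hz (h.free_of_triangle hpc hpz hcz hℓ (hsub {z} (by simpa))) fun A hA hzA ↦ ?_
  exact h.five_le_potential_of_triangle hpc hpz hcz hℓ (fun hpA ↦ hp (hA hpA))
    (fun hcA ↦ hc (hA hcA)) hzA (hsub A hA)

theorem not_triangle_of_thread (h : MinimalBad G ℓ X) (hza : z ≠ a) (hzb : z ≠ b) (hpb : p ≠ b)
    (hbc : b ≠ c) (hℓp : ℓ p ≠ .indep) (hℓa : ℓ a ≠ .indep) (hℓb : ℓ b ≠ .indep)
    (hℓc : ℓ c = .free) (np : nbrsIn G p X = {a, c, z}) (na : nbrsIn G a X = {p, b})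
    (nb : nbrsIn G b X = {a, q}) (nc : nbrsIn G c X = {p, z}) : False := by
  obtain ⟨haX, hpa⟩ := mem_and_adj_of_nbrsIn_eq np (x := a) (by simp)
  obtain ⟨hcX, hpc⟩ := mem_and_adj_of_nbrsIn_eq np (x := c) (by simp)
  obtain ⟨hzX, hpz⟩ := mem_and_adj_of_nbrsIn_eq np (x := z) (by simp)
  have hpX := (mem_and_adj_of_nbrsIn_eq na (x := p) (by simp)).1
  obtain ⟨hbX, hab⟩ := mem_and_adj_of_nbrsIn_eq na (x := b) (by simp)
  have hcz := (mem_and_adj_of_nbrsIn_eq nc (x := z) (by simp)).2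
  have hne : p ≠ a ∧ p ≠ c ∧ a ≠ b ∧ p ≠ z ∧ c ≠ z := ⟨hpa.ne, hpc.ne, hab.ne, hpz.ne, hcz.ne⟩
  have hnp := fun y ↦ mem_of_nbrsIn_eq np (x := y)
  have hna := fun y ↦ mem_of_nbrsIn_eq na (x := y)
  have hnb := fun y ↦ mem_of_nbrsIn_eq nb (x := y)
  have hnc := fun y ↦ mem_of_nbrsIn_eq nc (x := y)
  have hac : a ≠ c := by
    rintro rfl
    simpa [hpz.ne', hzb] using hna z hzX hcz
  obtain ⟨S, hS, hzS⟩ := h.exists_partition_mem_of_triangle (Y := X \ {p, a, b, c}) hpc hpz hcz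
    hℓc (by simp) (by simp) (by grind)
    ((Finset.ssubset_iff_of_subset (by grind)).2 ⟨a, haX, by simp [hac, hpa.ne']⟩)
  have hSX := hS.subset
  refine h.not_isIFPartitionOn S (hS.extend (by grind) ?_ (by grind))
  refine ((((hS.isForestOn.insert (v := b) ?_).insert (v := a) ?_).insert (v := p) ?_).insert
    (v := c) ?_).mono (by grind)
  · exact card_nbrsIn_le_one (x := q) (by grind)
  · exact card_nbrsIn_le_one (x := b) (by grind)
  · exact card_nbrsIn_le_one (x := a) (by grind)
  · exact card_nbrsIn_le_one (x := p) (by grind)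

theorem not_two_threads (h : MinimalBad G ℓ X) (hac : a ≠ c) (hza : z ≠ a) (hzc : z ≠ c)
    (hzb : z ≠ b) (hpb : p ≠ b) (hbc : b ≠ c) (hrz : r ≠ z) (hqc : q ≠ c)
    (hℓa : ℓ a = .free) (hℓb : ℓ b ≠ .indep) (hℓc : ℓ c = .free) (hℓz : ℓ z ≠ .indep)
    (np : nbrsIn G p X = {a, c, z}) (na : nbrsIn G a X = {p, b}) (nb : nbrsIn G b X = {a, q})
    (nc : nbrsIn G c X = {p, r}) : False := by
  obtain ⟨haX, hpa⟩ := mem_and_adj_of_nbrsIn_eq np (x := a) (by simp)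
  obtain ⟨hcX, hpc⟩ := mem_and_adj_of_nbrsIn_eq np (x := c) (by simp)
  obtain ⟨hzX, hpz⟩ := mem_and_adj_of_nbrsIn_eq np (x := z) (by simp)
  obtain ⟨-, hab⟩ := mem_and_adj_of_nbrsIn_eq na (x := b) (by simp)
  obtain ⟨hrX, hcr⟩ := mem_and_adj_of_nbrsIn_eq nc (x := r) (by simp)
  have hpr := h.ne_of_nbrsIn_eq_pair hcX (by simp [hℓc]) nc
  have hne : p ≠ a ∧ p ≠ c ∧ a ≠ b ∧ p ≠ z ∧ c ≠ r := ⟨hpa.ne, hpc.ne, hab.ne, hpz.ne, hcr.ne⟩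
  have hnp := fun y ↦ mem_of_nbrsIn_eq np (x := y)
  have hna := fun y ↦ mem_of_nbrsIn_eq na (x := y)
  have hnb := fun y ↦ mem_of_nbrsIn_eq nb (x := y)
  have hra : r ≠ a := by grind [hcr.symm]
  have hrb : r ≠ b := by grind [hcr.symm]
  have hnpr : ¬ G.Adj p r := fun hadj ↦ by grind
  obtain ⟨S, hS, hzS⟩ := h.exists_partition_sup_edge (Y := X \ {a, b, c}) (z := z) hpr hnpr
    hpc.symm hcr hℓc (by simp)
    ((Finset.ssubset_iff_of_subset (by grind)).2 ⟨a, haX, by simp [hac]⟩) (by grind) hℓz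
  obtain ⟨T, hT⟩ := hS.exists_of_sup_edge hzS hpr hnpr hac hbc hpb hzb hqc hra hrb hℓa hℓb
    (by simp [hℓc]) np na nb nc
  exact h.not_isIFPartitionOn T hT

theorem indep_of_threads (h : MinimalBad G ℓ X) (hac : a ≠ c) (hza : z ≠ a) (hzc : z ≠ c)
    (hℓp : ℓ p ≠ .indep) (hℓa : ℓ a = .free) (hℓb : ℓ b ≠ .indep) (hℓc : ℓ c = .free)
    (np : nbrsIn G p X = {a, c, z}) (na : nbrsIn G a X = {p, b}) (nb : nbrsIn G b X = {a, q})
    (nc : nbrsIn G c X = {p, r}) : ℓ z = .indep := by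
  by_contra hℓz
  obtain ⟨haX, hpa⟩ := mem_and_adj_of_nbrsIn_eq np (x := a) (by simp)
  obtain ⟨hcX, hpc⟩ := mem_and_adj_of_nbrsIn_eq np (x := c) (by simp)
  have hpX := (mem_and_adj_of_nbrsIn_eq na (x := p) (by simp)).1
  obtain ⟨hbX, hab⟩ := mem_and_adj_of_nbrsIn_eq na (x := b) (by simp)
  have hbq := (mem_and_adj_of_nbrsIn_eq nb (x := q) (by simp)).2
  have hpb := h.ne_of_nbrsIn_eq_pair haX (by simp [hℓa]) na
  have hpr := h.ne_of_nbrsIn_eq_pair hcX (by simp [hℓc]) nc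
  have hqa := h.ne_of_nbrsIn_eq_pair hbX hℓb nb
  have hnp := fun y ↦ mem_of_nbrsIn_eq np (x := y)
  have hnb := fun y ↦ mem_of_nbrsIn_eq nb (x := y)
  have hnc := fun y ↦ mem_of_nbrsIn_eq nc (x := y)
  by_cases hpb' : G.Adj p b
  · obtain rfl : q = p := by grind [hpa.ne, hpb'.symm]
    obtain rfl | rfl | rfl : b = a ∨ b = c ∨ b = z := by simpa using hnp b hbX hpb'
    · exact hab.ne rfl
    · exact h.not_triangle hpX hza hzc hℓp hℓa hℓb np na nb
    · rw [pair_comm c b] at np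
      exact h.not_triangle hpX hac.symm hzc.symm hℓp hℓa hℓb np na nb
  have hbc : b ≠ c := by rintro rfl; exact hpb' hpc
  have hzb : z ≠ b := by rintro rfl; exact hpb' (mem_and_adj_of_nbrsIn_eq np (x := z) (by simp)).2
  by_cases hqc : q = c
  · subst hqc
    obtain rfl : r = b := by grind [hbq.symm]
    exact h.not_four_cycle hpX hza hzc hzb hℓp hℓa hℓb (by simp [hℓc]) hℓz np na nb nc
  by_cases hrz : r = z
  · subst hrz
    exact h.not_triangle_of_thread hza hzb hpb hbc hℓp (by simp [hℓa]) hℓb hℓc np na nb nc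
  · exact h.not_two_threads hac hza hzc hzb hpb hbc hrz hqc hℓa hℓb hℓc hℓz np na nb nc

end MinimalBad

theorem potential_insert_union_le {v : V} {K : Finset V} (hA : v ∉ A) (hd : Disjoint A K)
    (hK : ∀ a ∈ K, G.Adj v a) (hKA : ∀ a ∈ K, ∃ x ∈ A, G.Adj a x) :
    potential G ℓ (insert v (A ∪ K)) + 3 * #K ≤ potential G ℓ A + (ℓ v).weight := by
  have hv : v ∉ A ∪ K := by
    rw [mem_union, not_or]
    exact ⟨hA, fun h ↦ (hK v h).ne rfl⟩
  have hweight : potential G ℓ K ≤ #K * 5 := by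
    have := sum_le_card_nsmul K (fun a ↦ (ℓ a).weight) 5 fun a _ ↦ (ℓ a).weight_le_five
    rw [nsmul_eq_mul] at this
    rw [potential]
    omega
  have hcross : #K ≤ dartCount G A K := by
    rw [card_eq_sum_ones, dartCount_comm, dartCount_eq_sum]
    exact sum_le_sum fun a ha ↦ by
      obtain ⟨x, hx, hax⟩ := hKA a ha
      exact card_nbrsIn_pos hx hax
  have hstar : #K ≤ #(nbrsIn G v (A ∪ K)) :=
    card_le_card fun a ha ↦ mem_nbrsIn.2 ⟨mem_union_right A ha, hK a ha⟩
  rw [potential_insert hv, potential_union hd]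
  omega

namespace MinimalBad

variable {v : V} {f : V → V}

theorem card_filter_image_lt_potential (h : MinimalBad G ℓ X) (hv : v ∈ X) (hℓv : ℓ v = .free)
    (hcard : 3 ≤ #(nbrsIn G v X)) (hf : ∀ a ∈ nbrsIn G v X, nbrsIn G a X = {v, f a})
    (hA : A ⊆ X \ insert v (nbrsIn G v X)) (hne : A.Nonempty) :
    #{x ∈ A | x ∈ (nbrsIn G v X).image f ∧ ℓ x = .free} < potential G ℓ A := by
  set T := {x ∈ A | x ∈ (nbrsIn G v X).image f ∧ ℓ x = .free}
  set K := {a ∈ nbrsIn G v X | f a ∈ A}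
  have hTK : #T ≤ #K := (card_le_card fun x hx ↦ by grind).trans (card_image_le (s := K) (f := f))
  have hvA : v ∉ A := fun h ↦ by simpa using hA h
  have hd : Disjoint A K := Finset.disjoint_left.2 fun a ha haK ↦ by
    have := hA ha
    grind
  have hle := potential_insert_union_le (ℓ := ℓ) hvA hd
    (fun a ha ↦ (mem_nbrsIn.1 (mem_filter.1 ha).1).2) fun a ha ↦
      ⟨f a, (mem_filter.1 ha).2,
        (mem_and_adj_of_nbrsIn_eq (hf a (mem_filter.1 ha).1) (by simp)).2⟩
  rw [hℓv, Label.weight] at hle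
  have hAX : A ⊂ X := hA.trans_ssubset (sdiff_ssubset (insert_subset hv (nbrsIn_subset v X))
    (insert_nonempty ..))
  have hsub : insert v (A ∪ K) ⊆ X :=
    insert_subset hv (union_subset hAX.1 ((filter_subset _ _).trans (nbrsIn_subset v X)))
  obtain hT0 | ⟨x, hx⟩ := T.eq_empty_or_nonempty
  · rw [hT0]
    exact h.sparse A hAX.1 hne
  have hx' := mem_filter.1 hx
  have htwo := h.two_le_potential hAX hx'.1 hx'.2.2
  obtain he | hlt := eq_or_ssubset_of_subset hsub
  · have hNK : nbrsIn G v X ⊆ K := fun a ha ↦ by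
      have haX := he.symm ▸ nbrsIn_subset v X ha
      have hav := (mem_nbrsIn.1 ha).2.ne
      have : a ∉ A := fun haA ↦ by simpa [ha] using hA haA
      grind
    have := card_le_card hNK
    have := h.sparse _ hsub (insert_nonempty ..)
    omega
  · have := h.two_le_potential hlt (mem_insert_self v _) hℓv
    omega

theorem not_all_nbrs_thread (h : MinimalBad G ℓ X) (hv : v ∈ X) (hℓv : ℓ v = .free)
    (hcard : 3 ≤ #(nbrsIn G v X)) (hℓ : ∀ a ∈ nbrsIn G v X, ℓ a ≠ .indep)
    (hf : ∀ a ∈ nbrsIn G v X, nbrsIn G a X = {v, f a}) : False := by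
  set N := nbrsIn G v X
  have hNX : N ⊆ X := nbrsIn_subset v X
  obtain ⟨S, hS, hfS⟩ := h.exists_partition_avoiding (complexity_lt_of_ssubset
    (sdiff_ssubset (insert_subset hv hNX) (insert_nonempty ..)) fun _ _ ↦ id) (N.image f)
    fun A hA hne ↦ h.card_filter_image_lt_potential hv hℓv hcard hf hA hne
  have hSX := hS.subset
  have hNS : ∀ a ∈ N, ∀ s ∈ S, ¬ G.Adj a s := fun a ha s hs has ↦ by
    have hsX := mem_sdiff.1 (hSX hs)
    have hsf : s = f a := by
      have := mem_of_nbrsIn_eq (hf a ha) hsX.1 has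
      grind
    refine hfS s (hSX hs) (mem_image.2 ⟨a, ha, hsf.symm⟩) ?_ hs
    rw [hsf]
    exact h.ne_indep_of_nbrsIn_eq_pair (hNX ha) (hℓ a ha) (by rw [hf a ha, pair_comm])
  have hNv : ∀ y ∈ X, G.Adj v y → y ∈ N := fun y hy hvy ↦ mem_nbrsIn.2 ⟨hy, hvy⟩
  have hvN : v ∉ N := fun hvN ↦ (mem_nbrsIn.1 hvN).2.ne rfl
  refine h.not_isIFPartitionOn _ (hS.extend_insert (by grind) hv (mem_insert_self v N) hℓv ?_
    (by grind) (by grind))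
  refine (hS.isForestOn.union (K := N) fun a ha ↦ card_nbrsIn_le_one (x := f a) ?_).mono (by grind)
  intro y hy hay
  have := mem_of_nbrsIn_eq (hf a ha) (by grind) hay
  grind

end MinimalBad

theorem exists_eq_pair_of_card_eq_two {s : Finset V} {a : V} (ha : a ∈ s) (hs : #s = 2) :
    ∃ b, s = {a, b} := by
  obtain ⟨b, hb⟩ := card_eq_one.1 (by rw [card_erase_of_mem ha, hs] : #(s.erase a) = 1)
  exact ⟨b, by rw [← hb, insert_erase ha]⟩

theorem exists_eq_triple_of_card_eq_three {s : Finset V} {a : V} (ha : a ∈ s) (hs : #s = 3) :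
    ∃ b c, a ≠ b ∧ a ≠ c ∧ b ≠ c ∧ s = {a, b, c} := by
  obtain ⟨b, c, hbc, he⟩ := card_eq_two.1 (by rw [card_erase_of_mem ha, hs] : #(s.erase a) = 2)
  have hb : b ∈ s.erase a := by simp [he]
  have hc : c ∈ s.erase a := by simp [he]
  exact ⟨b, c, (ne_of_mem_erase hb).symm, (ne_of_mem_erase hc).symm, hbc,
    by rw [← he, insert_erase ha]⟩

section Discharging

/-- A thread vertex is a free vertex of degree two. -/
def IsThreadVertex (G : SimpleGraph V) (ℓ : V → Label) (X : Finset V) (v : V) : Prop :=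
  ℓ v = .free ∧ #(nbrsIn G v X) = 2

/-- A heavy vertex has a neighbour of degree two; a heavy thread vertex sends its whole charge to
its other neighbour. -/
def IsHeavy (G : SimpleGraph V) (X : Finset V) (v : V) : Prop :=
  ∃ a ∈ nbrsIn G v X, #(nbrsIn G a X) = 2

/-- The charge that `x` sends to its neighbour `y` in the discharging argument. -/
noncomputable def flow (G : SimpleGraph V) (ℓ : V → Label) (X : Finset V) (x y : V) : ℤ :=
  if IsThreadVertex G ℓ X x then
    if 3 ≤ #(nbrsIn G y X) then if IsHeavy G X x then 2 else 1 else 0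
  else if ℓ y = .indep then 2 else 0

/-- The charge of `x` after discharging. The initial charge is twice the contribution of `x` to
the potential, each edge being shared equally by its endpoints. -/
noncomputable def finalCharge (G : SimpleGraph V) (ℓ : V → Label) (X : Finset V) (x : V) : ℤ :=
  2 * ((ℓ x).weight - 2 * #(nbrsIn G x X)) +
    (∑ y ∈ nbrsIn G x X, flow G ℓ X y x - ∑ y ∈ nbrsIn G x X, flow G ℓ X x y)

theorem sum_finalCharge : ∑ x ∈ X, finalCharge G ℓ X x = 2 * potential G ℓ X := by
  have hcomm : ∑ x ∈ X, ∑ y ∈ nbrsIn G x X, flow G ℓ X y x =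
      ∑ x ∈ X, ∑ y ∈ nbrsIn G x X, flow G ℓ X x y :=
    Finset.sum_comm' fun x y ↦ by
      rw [mem_nbrsIn, mem_nbrsIn, G.adj_comm]
      tauto
  simp only [finalCharge, sum_add_distrib, sum_sub_distrib, hcomm, ← mul_sum, potential,
    dartCount_eq_sum]
  push_cast
  ring

variable {x y a b c : V}

theorem flow_nonneg : 0 ≤ flow G ℓ X x y := by
  unfold flow
  split_ifs <;> simp

theorem flow_le_two : flow G ℓ X x y ≤ 2 := by
  unfold flow
  split_ifs <;> simp

theorem flow_le_one (hy : ℓ y ≠ .indep) (hx : ¬ IsHeavy G X x) : flow G ℓ X x y ≤ 1 := by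
  simp only [flow, hy, hx, if_false]
  split_ifs <;> simp

theorem flow_eq_zero (hy : ℓ y ≠ .indep) (hx : ¬ IsThreadVertex G ℓ X x) :
    flow G ℓ X x y = 0 := by
  simp [flow, hy, hx]

theorem flow_eq_two (hy : ℓ y = .indep) (hx : ¬ IsThreadVertex G ℓ X x) :
    flow G ℓ X x y = 2 := by
  simp [flow, hy, hx]

theorem sum_flow_nonneg (s : Finset V) : 0 ≤ ∑ y ∈ s, flow G ℓ X x y :=
  sum_nonneg fun _ _ ↦ flow_nonneg

theorem sum_flow_le_two_mul_card (s : Finset V) : ∑ y ∈ s, flow G ℓ X y x ≤ 2 * #s := by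
  have := sum_le_card_nsmul s (flow G ℓ X · x) 2 fun _ _ ↦ flow_le_two
  rw [nsmul_eq_mul] at this
  linarith

theorem sum_flow_le_of_flow_eq_zero {s : Finset V} {k : ℤ} (hk : ∀ y ∈ s, flow G ℓ X y x ≤ k)
    (ha : a ∈ s) (h0 : flow G ℓ X a x = 0) : ∑ y ∈ s, flow G ℓ X y x ≤ k * (#s - 1) := by
  have hle := sum_le_card_nsmul (s.erase a) (flow G ℓ X · x) k fun y hy ↦ hk y (mem_of_mem_erase hy)
  rw [nsmul_eq_mul, cast_card_erase_of_mem ha] at hle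
  rw [← add_sum_erase s _ ha, h0]
  linarith

namespace MinimalBad

theorem nbrsIn_nonempty (h : MinimalBad G ℓ X) (hx : x ∈ X) : (nbrsIn G x X).Nonempty := by
  by_contra! hempty
  have herase : #(nbrsIn G x (X.erase x)) = 0 :=
    Nat.le_zero.1 ((card_nbrsIn_mono x (erase_subset x X)).trans (by simp [hempty]))
  have hρ := potential_insert (G := G) (ℓ := ℓ) (notMem_erase x X)
  rw [insert_erase hx, h.potential_eq_one, herase] at hρ
  have hpos := (ℓ x).weight_pos
  obtain ⟨z, hz, hℓz⟩ := h.exists_free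
  obtain rfl | hzx := eq_or_ne z x
  · obtain he | hne := (X.erase z).eq_empty_or_nonempty
    · simp [he, potential, dartCount_eq_sum, hℓz, Label.weight] at hρ
    · have := h.sparse _ (erase_subset z X) hne
      omega
  · have := h.sparse _ (erase_subset x X) ⟨z, mem_erase.2 ⟨hzx, hz⟩⟩
    omega

theorem exists_nbrsIn_eq_pair_of_card_eq_two (h : MinimalBad G ℓ X) (hx : x ∈ X)
    (hℓ : ℓ x ≠ .indep) (hcard : #(nbrsIn G x X) = 2) (ha : a ∈ nbrsIn G x X) :
    ∃ b, a ≠ b ∧ ℓ b ≠ .indep ∧ nbrsIn G x X = {a, b} := by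
  obtain ⟨b, nx⟩ := exists_eq_pair_of_card_eq_two ha hcard
  exact ⟨b, h.ne_of_nbrsIn_eq_pair hx hℓ nx,
    h.ne_indep_of_nbrsIn_eq_pair hx hℓ (nx.trans (pair_comm a b)), nx⟩

theorem exists_nbr_not_isThreadVertex (h : MinimalBad G ℓ X) (hx : x ∈ X) (hℓ : ℓ x = .free)
    (hcard : 3 ≤ #(nbrsIn G x X)) : ∃ a ∈ nbrsIn G x X, ¬ IsThreadVertex G ℓ X a := by
  by_contra! hthread
  have hpair (a : V) : ∃ b, a ∈ nbrsIn G x X → nbrsIn G a X = {x, b} := by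
    by_cases ha : a ∈ nbrsIn G x X
    · obtain ⟨b, hb⟩ := exists_eq_pair_of_card_eq_two
        (mem_nbrsIn.2 ⟨hx, (mem_nbrsIn.1 ha).2.symm⟩) (hthread a ha).2
      exact ⟨b, fun _ ↦ hb⟩
    · exact ⟨a, fun h ↦ absurd h ha⟩
  choose f hf using hpair
  exact h.not_all_nbrs_thread hx hℓ hcard (fun a ha ↦ by simp [(hthread a ha).1]) hf

theorem indep_of_isHeavy (h : MinimalBad G ℓ X) (hx : x ∈ X) (hℓ : ℓ x ≠ .indep)
    (nx : nbrsIn G x X = {a, b, c}) (hab : a ≠ b) (hca : c ≠ a) (hcb : c ≠ b)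
    (ha : IsThreadVertex G ℓ X a) (hheavy : IsHeavy G X a) (hb : IsThreadVertex G ℓ X b) :
    ℓ c = .indep := by
  have hcard : #(nbrsIn G x X) = 3 := by rw [nx]; exact card_eq_three.2 ⟨a, b, c, by grind⟩
  have hxa := mem_and_adj_of_nbrsIn_eq nx (x := a) (by simp)
  have hxb := mem_and_adj_of_nbrsIn_eq nx (x := b) (by simp)
  have hℓa : ℓ a ≠ .indep := by simp [ha.1]
  obtain ⟨d, -, hℓd, na⟩ := h.exists_nbrsIn_eq_pair_of_card_eq_two hxa.1 hℓa ha.2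
    (mem_nbrsIn.2 ⟨hx, hxa.2.symm⟩)
  obtain ⟨r, nb⟩ := exists_eq_pair_of_card_eq_two (mem_nbrsIn.2 ⟨hx, hxb.2.symm⟩) hb.2
  have hd := mem_and_adj_of_nbrsIn_eq na (x := d) (by simp)
  have hdcard : #(nbrsIn G d X) = 2 := by
    obtain ⟨y, hy, hycard⟩ := hheavy
    grind
  obtain ⟨q, nd⟩ := exists_eq_pair_of_card_eq_two (mem_nbrsIn.2 ⟨hxa.1, hd.2.symm⟩) hdcard
  exact h.indep_of_threads hab hca hcb hℓ ha.1 hℓd hb.1 nx na nd nb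

theorem finalCharge_nonpos_of_indep (h : MinimalBad G ℓ X) (hx : x ∈ X) (hℓ : ℓ x = .indep) :
    finalCharge G ℓ X x ≤ 0 := by
  have := card_pos.2 (h.nbrsIn_nonempty hx)
  have := sum_flow_le_two_mul_card (G := G) (ℓ := ℓ) (X := X) (x := x) (nbrsIn G x X)
  have := sum_flow_nonneg (G := G) (ℓ := ℓ) (X := X) (x := x) (nbrsIn G x X)
  rw [finalCharge, hℓ, Label.weight]
  omega

theorem two_le_sum_flow_of_isThreadVertex (h : MinimalBad G ℓ X) (hx : x ∈ X)
    (hthread : IsThreadVertex G ℓ X x) : 2 ≤ ∑ y ∈ nbrsIn G x X, flow G ℓ X x y := by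
  have hℓ : ℓ x ≠ .indep := by simp [hthread.1]
  obtain ⟨a, ha⟩ := h.nbrsIn_nonempty hx
  obtain ⟨b, hab, hℓb, nx⟩ := h.exists_nbrsIn_eq_pair_of_card_eq_two hx hℓ hthread.2 ha
  have hℓa : ℓ a ≠ .indep := h.ne_indep_of_nbrsIn_eq_pair hx hℓ nx
  have hxa := mem_nbrsIn.1 ha
  have hxb := mem_and_adj_of_nbrsIn_eq nx (x := b) (by simp)
  have hda := h.two_le_card_nbrsIn hxa.1 hℓa
  have hdb := h.two_le_card_nbrsIn hxb.1 hℓb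
  have hnot : ¬ (#(nbrsIn G a X) = 2 ∧ #(nbrsIn G b X) = 2) := fun ⟨ha2, hb2⟩ ↦ by
    obtain ⟨a', na⟩ := exists_eq_pair_of_card_eq_two (mem_nbrsIn.2 ⟨hx, hxa.2.symm⟩) ha2
    obtain ⟨b', nb⟩ := exists_eq_pair_of_card_eq_two (mem_nbrsIn.2 ⟨hx, hxb.2.symm⟩) hb2
    exact h.not_three_thread hx hthread.1 hℓa hℓb nx na nb
  have hheavy : IsHeavy G X x ↔ #(nbrsIn G a X) = 2 ∨ #(nbrsIn G b X) = 2 := by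
    simp [IsHeavy, nx]
  rw [nx, sum_pair hab]
  grind [flow]

theorem finalCharge_nonpos_of_card_eq_two (h : MinimalBad G ℓ X) (hx : x ∈ X)
    (hℓ : ℓ x ≠ .indep) (hcard : #(nbrsIn G x X) = 2) : finalCharge G ℓ X x ≤ 0 := by
  have hin : ∑ y ∈ nbrsIn G x X, flow G ℓ X y x = 0 :=
    sum_eq_zero fun y _ ↦ by simp [flow, hcard, hℓ]
  have hout := sum_flow_nonneg (G := G) (ℓ := ℓ) (X := X) (x := x) (nbrsIn G x X)
  rw [finalCharge, hin, hcard]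
  cases hx' : ℓ x with
  | indep => exact absurd hx' hℓ
  | forest =>
    rw [Label.weight]
    omega
  | free =>
    have := h.two_le_sum_flow_of_isThreadVertex hx ⟨hx', hcard⟩
    rw [Label.weight]
    omega

theorem finalCharge_nonpos_of_four_le (h : MinimalBad G ℓ X) (hx : x ∈ X) (hℓ : ℓ x ≠ .indep)
    (hcard : 4 ≤ #(nbrsIn G x X)) : finalCharge G ℓ X x ≤ 0 := by
  have hin := sum_flow_le_two_mul_card (G := G) (ℓ := ℓ) (X := X) (x := x) (nbrsIn G x X)
  have hout := sum_flow_nonneg (G := G) (ℓ := ℓ) (X := X) (x := x) (nbrsIn G x X)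
  rw [finalCharge]
  cases hx' : ℓ x with
  | indep => exact absurd hx' hℓ
  | forest =>
    rw [Label.weight]
    omega
  | free =>
    obtain ⟨a, ha, hthread⟩ := h.exists_nbr_not_isThreadVertex hx hx' (by omega)
    have := sum_flow_le_of_flow_eq_zero (fun y _ ↦ flow_le_two) ha (flow_eq_zero hℓ hthread)
    rw [Label.weight]
    omega

theorem sum_flow_sub_le_of_isHeavy (h : MinimalBad G ℓ X) (hx : x ∈ X) (hℓ : ℓ x ≠ .indep)
    (hcard : #(nbrsIn G x X) = 3) (ha : a ∈ nbrsIn G x X) (hthread : IsThreadVertex G ℓ X a)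
    (hheavy : IsHeavy G X a) :
    ∑ y ∈ nbrsIn G x X, flow G ℓ X y x - ∑ y ∈ nbrsIn G x X, flow G ℓ X x y ≤ 2 := by
  obtain ⟨b, c, hab, hac, hbc, nx⟩ := exists_eq_triple_of_card_eq_three ha hcard
  have hnot : ¬ IsThreadVertex G ℓ X x := fun h ↦ by simp [h.2] at hcard
  have hflow {b c : V} (hab : a ≠ b) (hac : a ≠ c) (hbc : b ≠ c) (nx : nbrsIn G x X = {a, b, c})
      (hb : IsThreadVertex G ℓ X b) : flow G ℓ X c x = 0 ∧ flow G ℓ X x c = 2 := by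
    have hℓc := h.indep_of_isHeavy hx hℓ nx hab hac.symm hbc.symm hthread hheavy hb
    exact ⟨flow_eq_zero hℓ fun hc ↦ by simpa [hℓc] using hc.1, flow_eq_two hℓc hnot⟩
  have hb := hflow hab hac hbc nx
  have hc := hflow hac hab hbc.symm (nx.trans (by grind))
  rw [nx]
  simp only [sum_insert (show a ∉ ({b, c} : Finset V) by grind), sum_pair hbc]
  have hnonneg (y : V) : 0 ≤ flow G ℓ X x y := flow_nonneg
  have hle_two (y : V) : flow G ℓ X y x ≤ 2 := flow_le_two
  by_cases IsThreadVertex G ℓ X b <;> by_cases IsThreadVertex G ℓ X c <;>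
    grind [flow_eq_zero]

theorem finalCharge_nonpos_of_card_eq_three (h : MinimalBad G ℓ X) (hx : x ∈ X)
    (hℓ : ℓ x ≠ .indep) (hcard : #(nbrsIn G x X) = 3) : finalCharge G ℓ X x ≤ 0 := by
  have hweight := (ℓ x).weight_le_five
  rw [finalCharge, hcard]
  by_cases hheavy : ∃ a ∈ nbrsIn G x X, IsThreadVertex G ℓ X a ∧ IsHeavy G X a
  · obtain ⟨a, ha, hthread, hheavy⟩ := hheavy
    have := h.sum_flow_sub_le_of_isHeavy hx hℓ hcard ha hthread hheavy
    omega
  · have hle : ∀ y ∈ nbrsIn G x X, flow G ℓ X y x ≤ 1 := fun y hy ↦ by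
      by_cases hthread : IsThreadVertex G ℓ X y
      · exact flow_le_one hℓ fun h ↦ hheavy ⟨y, hy, hthread, h⟩
      · simp [flow_eq_zero hℓ hthread]
    have hout := sum_flow_nonneg (G := G) (ℓ := ℓ) (X := X) (x := x) (nbrsIn G x X)
    cases hx' : ℓ x with
    | indep => exact absurd hx' hℓ
    | forest =>
      have := sum_le_card_nsmul _ _ _ hle
      rw [hcard, nsmul_eq_mul] at this
      rw [Label.weight]
      omega
    | free =>
      obtain ⟨a, ha, hthread⟩ := h.exists_nbr_not_isThreadVertex hx hx' hcard.ge
      have := sum_flow_le_of_flow_eq_zero hle ha (flow_eq_zero hℓ hthread)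
      rw [hcard] at this
      rw [Label.weight]
      omega

theorem finalCharge_nonpos (h : MinimalBad G ℓ X) (hx : x ∈ X) : finalCharge G ℓ X x ≤ 0 := by
  by_cases hℓ : ℓ x = .indep
  · exact h.finalCharge_nonpos_of_indep hx hℓ
  obtain hle | hlt := le_or_gt 4 #(nbrsIn G x X)
  · exact h.finalCharge_nonpos_of_four_le hx hℓ hle
  obtain hcard | hcard : #(nbrsIn G x X) = 2 ∨ #(nbrsIn G x X) = 3 := by
    have := h.two_le_card_nbrsIn hx hℓ
    omega
  · exact h.finalCharge_nonpos_of_card_eq_two hx hℓ hcard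
  · exact h.finalCharge_nonpos_of_card_eq_three hx hℓ hcard

end MinimalBad

end Discharging

theorem not_minimalBad : ¬ MinimalBad G ℓ X := fun h ↦ by
  have hsum := sum_nonpos fun x hx ↦ h.finalCharge_nonpos hx
  rw [sum_finalCharge, h.potential_eq_one] at hsum
  norm_num at hsum

theorem Sparse.exists_isIFPartitionOn (h : Sparse G ℓ X) : ∃ S, IsIFPartitionOn G ℓ X S := by
  induction hn : complexity ℓ X using Nat.strong_induction_on generalizing G ℓ X with
  | _ n ih =>
    by_contra! hnot
    exact not_minimalBad
      ⟨h, fun G' ℓ' X' hlt hsparse ↦ ih _ (hn ▸ hlt) hsparse rfl, hnot⟩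

section Height

/-- A height function of a rooted forest on `Y`: adjacent vertices differ in height by one, and
every vertex has at most one lower neighbour, its parent. -/
structure IsHeightOn (G : SimpleGraph V) (Y : Finset V) (f : V → ℕ) : Prop where
  eq_add_one_or : ∀ x ∈ Y, ∀ y ∈ Y, G.Adj x y → f x = f y + 1 ∨ f y = f x + 1
  eq_of_adj : ∀ x ∈ Y, ∀ y ∈ Y, ∀ z ∈ Y, G.Adj x y → G.Adj x z → f x = f y + 1 → f x = f z + 1 →
    y = z

variable {f : V → ℕ} {u v : V}

protected theorem IsHeightOn.insert (h : IsHeightOn G Y f)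
    (hu : ∀ x ∈ Y, G.Adj v x → x = u) :
    IsHeightOn G (insert v Y) (Function.update f v (f u + 1)) where
  eq_add_one_or := by
    have := h.eq_add_one_or
    grind [G.irrefl, G.adj_comm]
  eq_of_adj := by
    have := h.eq_of_adj
    grind [G.irrefl, G.adj_comm]

theorem IsForestOn.exists_card_nbrsIn_le_one (h : IsForestOn G Y) (hne : Y.Nonempty) :
    ∃ v ∈ Y, #(nbrsIn G v Y) ≤ 1 := by
  by_contra! hlt
  have hsum := card_nsmul_le_sum Y (fun v ↦ #(nbrsIn G v Y)) 2 hlt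
  have := h Y Subset.rfl hne
  rw [dartCount_eq_sum] at this
  rw [smul_eq_mul] at hsum
  omega

theorem IsForestOn.exists_isHeightOn (h : IsForestOn G Y) : ∃ f, IsHeightOn G Y f := by
  induction Y using Finset.strongInduction with
  | H Y ih =>
    obtain rfl | hne := Y.eq_empty_or_nonempty
    · exact ⟨fun _ ↦ 0, by simp, by simp⟩
    obtain ⟨v, hv, hcard⟩ := h.exists_card_nbrsIn_le_one hne
    obtain ⟨f, hf⟩ := ih _ (erase_ssubset hv) (h.mono (erase_subset v Y))
    have : Nonempty V := ⟨v⟩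
    obtain ⟨u, hu⟩ := card_le_one_iff_subset_singleton.1 hcard
    rw [← insert_erase hv]
    exact ⟨_, hf.insert fun x hx hvx ↦
      mem_singleton.1 (hu (mem_nbrsIn.2 ⟨mem_of_mem_erase hx, hvx⟩))⟩

end Height

section Coloring

theorem isStarForest_of_forall_adj {W : Type*} {H : SimpleGraph W}
    (h : ∀ a b c d, H.Adj a b → H.Adj b c → H.Adj c d → a = c ∨ b = d) : IsStarForest H := by
  refine ⟨fun v p hp ↦ ?_, h⟩
  have hlength := hp.three_le_length
  obtain heq | heq := h _ _ _ _ (p.adj_getVert_succ (i := 0) (by omega))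
    (p.adj_getVert_succ (i := 1) (by omega)) (p.adj_getVert_succ (i := 2) (by omega))
  · have := hp.getVert_injOn' (x₁ := 0) (x₂ := 2) (by simp) (by grind) heq
    omega
  · have := hp.getVert_injOn (x₁ := 1) (x₂ := 3) (by grind) (by grind) heq
    omega

theorem isStarColoring_of_forall_adj {k : ℕ} {c : V → Fin k} (hc : ∀ u v, G.Adj u v → c u ≠ c v)
    (h : ∀ x y z t, G.Adj x y → G.Adj y z → G.Adj z t → c x = c z → c y = c t → x = z ∨ y = t) :
    IsStarColoring G c := by
  refine ⟨hc, fun i j ↦ isStarForest_of_forall_adj ?_⟩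
  rintro ⟨x, hx⟩ ⟨y, hy⟩ ⟨z, hz⟩ ⟨t, ht⟩ hxy hyz hzt
  simp only [comap_adj, Function.Embedding.subtype_apply] at hxy hyz hzt
  have := hc x y hxy
  have := hc y z hyz
  have := hc z t hzt
  simpa using h x y z t hxy hyz hzt (by grind) (by grind)

/-- The colouring which gives the vertices of `S` the colour `3` and the other vertices their
height modulo `3`. -/
noncomputable def heightColoring (S : Finset V) (f : V → ℕ) (v : V) : Fin 4 :=
  if v ∈ S then 3 else ⟨f v % 3, by omega⟩

theorem heightColoring_eq_iff {f : V → ℕ} {u v : V} :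
    heightColoring S f u = heightColoring S f v ↔
      u ∈ S ∧ v ∈ S ∨ u ∉ S ∧ v ∉ S ∧ f u % 3 = f v % 3 := by
  grind [heightColoring, Fin.ext_iff]

theorem IsIFPartitionOn.isStarColoring [Fintype V] {f : V → ℕ} (h : IsIFPartitionOn G ℓ univ S)
    (hf : IsHeightOn G (univ \ S) f) : IsStarColoring G (heightColoring S f) := by
  have hne : ∀ u ∉ S, ∀ v ∉ S, G.Adj u v → f u = f v + 1 ∨ f v = f u + 1 := fun u hu v hv ↦
    hf.eq_add_one_or u (by simpa) v (by simpa)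
  have hlower : ∀ x ∉ S, ∀ y ∉ S, ∀ z ∉ S, G.Adj x y → G.Adj x z → f x = f y + 1 →
      f x = f z + 1 → y = z := fun x hx y hy z hz ↦
    hf.eq_of_adj x (by simpa) y (by simpa) z (by simpa)
  refine isStarColoring_of_forall_adj (fun u v huv heq ↦ ?_) fun x y z t hxy hyz hzt hxz hyt ↦ ?_
  · obtain ⟨hu, hv⟩ | ⟨hu, hv, hmod⟩ := heightColoring_eq_iff.1 heq
    · exact h.not_adj u hu v hv huv
    · have := hne u hu v hv huv
      omega
  obtain ⟨hx, hz⟩ | ⟨hx, hz, hmod_xz⟩ := heightColoring_eq_iff.1 hxz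
  · exact Or.inl (h.eq_of_adj y (mem_univ y) x hx z hz hxy.symm hyz)
  obtain ⟨hy, ht⟩ | ⟨hy, ht, hmod_yt⟩ := heightColoring_eq_iff.1 hyt
  · exact Or.inr (h.eq_of_adj z (mem_univ z) y hy t ht hyz.symm hzt)
  have hxy' := hne x hx y hy hxy
  have hyz' := hne y hy z hz hyz
  have hzt' := hne z hz t ht hzt
  obtain hlow | hhigh : f y = f x + 1 ∨ f z = f y + 1 := by omega
  · exact Or.inl (hlower y hy x hx z hz hxy.symm hyz hlow (by omega))
  · exact Or.inr (hlower z hz y hy t ht hyz.symm hzt hhigh (by omega))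

theorem IsIFPartitionOn.starColorable [Fintype V] (h : IsIFPartitionOn G ℓ univ S) :
    StarColorable G 4 := by
  obtain ⟨f, hf⟩ := h.isForestOn.exists_isHeightOn
  exact ⟨_, h.isStarColoring hf⟩

end Coloring

theorem dartCount_self_eq_two_mul_card_edgeSet [Finite V] :
    dartCount G A A = 2 * Nat.card ((⊤ : G.Subgraph).induce (A : Set V)).edgeSet := by
  cases nonempty_fintype V
  rw [← Subgraph.edgeSet_spanningCoe, Nat.card_eq_fintype_card, ← edgeFinset_card,
    two_mul_card_edgeFinset, dartCount]
  congr 1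
  ext p
  simp [G.mem_interedges_iff]

theorem sparse_of_madLt [Finite V] (h : MadLt G (5 / 2)) : Sparse G (fun _ ↦ .free) A := by
  intro B _ hne
  have hmad := h ((⊤ : G.Subgraph).induce (B : Set V)) (by simpa)
  have hpos : (0 : ℚ) < #B := by exact_mod_cast card_pos.2 hne
  rw [Subgraph.induce_verts, Set.ncard_coe_finset, div_lt_iff₀ hpos] at hmad
  have hcast : (4 * Nat.card ((⊤ : G.Subgraph).induce (B : Set V)).edgeSet : ℤ) < 5 * #B := by
    have : (4 * Nat.card ((⊤ : G.Subgraph).induce (B : Set V)).edgeSet : ℚ) < 5 * #B := by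
      linarith
    exact_mod_cast this
  rw [potential, dartCount_self_eq_two_mul_card_edgeSet, sum_const, nsmul_eq_mul, Label.weight]
  push_cast
  linarith

end StarColoring

/-- If `G` is a finite simple graph with maximum average degree less than `5/2`,
then the star chromatic number of `G` is at most `4`. -/
theorem starChromatic_le_four_of_mad_lt {V : Type*} [Fintype V] (G : SimpleGraph V)
    (h : MadLt G (5 / 2)) : StarColorable G 4 := by
  obtain ⟨S, hS⟩ := (StarColoring.sparse_of_madLt h).exists_isIFPartitionOn
  exact hS.starColorable
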